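/- (Uniform variance upper bound.) Let ψ be the (σ,λ)-GFF on V_N. There exists a constant C_0 = C_0(σ) > 0 such that for all scales 0 ≤ α < α' ≤ 1 and all N large enough (independent of α and α'), max_{v∈V_N} E[ψ_v(α,α')²] ≤ 𝒥_{σ²}(α,α') log N + C_0. -/

import Mathlib

open Filter
open scoped Classical

noncomputable section GFFCommon

/-- Vertices of `ℤ²`. -/
abbrev Vtx : Type := ℤ × ℤ

/-- Sample space: a real-valued field indexed by the vertices of `ℤ²`. -/
abbrev FieldSp : Type := Vtx → ℝ

/-- The box `V_N = {0,1,…,N}²`. -/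
def VN (N : ℕ) : Finset Vtx := Finset.Icc (0, 0) ((N : ℤ), (N : ℤ))

/-- The boundary `∂B` of a finite box `B ⊆ ℤ²`:
vertices of `B` having a (Euclidean distance 1) neighbour outside `B`. -/
def bdry (B : Finset Vtx) : Finset Vtx :=
  B.filter fun v =>
    ¬((v.1 + 1, v.2) ∈ B ∧ (v.1 - 1, v.2) ∈ B ∧ (v.1, v.2 + 1) ∈ B ∧ (v.1, v.2 - 1) ∈ B)

/-- The interior `B° = B ∖ ∂B`. -/
def intr (B : Finset Vtx) : Finset Vtx := B \ bdry B

/-- The neighbourhood `[v]_λ` of `v` in `V_N`. -/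
def nbhd (N : ℕ) (lam : ℝ) (v : Vtx) : Finset Vtx :=
  if lam = 0 then VN N
  else if lam = 1 then {v}
  else (VN N).filter fun w =>
    |(w.1 : ℝ) - (v.1 : ℝ)| ≤ (N : ℝ) ^ ((1 : ℝ) - lam) / 2 ∧
    |(w.2 : ℝ) - (v.2 : ℝ)| ≤ (N : ℝ) ^ ((1 : ℝ) - lam) / 2

/-- The σ-algebra `F_{∂[v]_λ ∪ [v]_λ^c}`, generated by the field variables on the
boundary of `[v]_λ` and those outside of it. -/
def scaleAlg (N : ℕ) (lam : ℝ) (v : Vtx) : MeasurableSpace FieldSp :=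
  ⨆ w ∈ {w : Vtx | w ∈ VN N ∧ w ∉ intr (nbhd N lam v)},
    MeasurableSpace.comap (fun ω : FieldSp => ω w) inferInstance

/-- `G` is the Green function of simple random walk killed on `∂B`, normalized by `π/2`:
it vanishes unless both arguments are in `B°`, and in `B°` it satisfies the
first-step (discrete Poisson equation) characterization
`G(x,y) = (1/4)·Σ_{x'∼x} G(x',y) + (π/2)·1_{x=y}`. -/
def IsGreenFn (B : Finset Vtx) (G : Vtx → Vtx → ℝ) : Prop :=
  (∀ x y : Vtx, x ∉ intr B ∨ y ∉ intr B → G x y = 0) ∧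
  ∀ y ∈ intr B, ∀ x ∈ intr B,
    G x y = (G (x.1 + 1, x.2) y + G (x.1 - 1, x.2) y
        + G (x.1, x.2 + 1) y + G (x.1, x.2 - 1) y) / 4
      + (Real.pi / 2) * (if x = y then 1 else 0)

/-- `P` is the law (on the canonical space `FieldSp`) of the Gaussian free field on `V_N`:
a centered Gaussian field with covariance the Green function `G_{V_N}`. -/
def IsGFF (N : ℕ) (P : MeasureTheory.Measure FieldSp) : Prop :=
  MeasureTheory.IsProbabilityMeasure P ∧
  ∃ G : Vtx → Vtx → ℝ, IsGreenFn (VN N) G ∧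
    ∀ c : Vtx → ℝ,
      P.map (fun ω => ∑ v ∈ VN N, c v * ω v) =
        ProbabilityTheory.gaussianReal 0 (Real.toNNReal (∑ v ∈ VN N, ∑ w ∈ VN N, c v * c w * G v w))

open MeasureTheory in
/-- `φ_v(λ) = E[φ_v | F_{∂[v]_λ ∪ [v]_λ^c}]`. -/
def phiScale (N : ℕ) (P : MeasureTheory.Measure FieldSp) (v : Vtx) (lam : ℝ) : FieldSp → ℝ :=
  P[fun ω : FieldSp => ω v | scaleAlg N lam v]

/-- Admissible parameters `(σ,λ)`: `σ_1,…,σ_M > 0` and `0 = λ_0 < λ_1 < … < λ_M = 1`. -/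
def ScaleParams (M : ℕ) (sigv lamv : ℕ → ℝ) : Prop :=
  1 ≤ M ∧ (∀ i ∈ Finset.Icc 1 M, 0 < sigv i) ∧
  lamv 0 = 0 ∧ lamv M = 1 ∧ ∀ i, i < M → lamv i < lamv (i + 1)

/-- The `(σ,λ)`-GFF: `ψ_v = Σ_{i=1}^M σ_i (φ_v(λ_i) − φ_v(λ_{i−1}))`. -/
def psiFld (N M : ℕ) (sigv lamv : ℕ → ℝ) (P : MeasureTheory.Measure FieldSp) (v : Vtx) : FieldSp → ℝ :=
  fun ω => ∑ i ∈ Finset.Icc 1 M, sigv i * (phiScale N P v (lamv i) ω - phiScale N P v (lamv (i - 1)) ω)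

open MeasureTheory in
/-- `ψ_v(λ) = E[ψ_v | F_{∂[v]_λ ∪ [v]_λ^c}]`. -/
def psiScale (N M : ℕ) (sigv lamv : ℕ → ℝ) (P : MeasureTheory.Measure FieldSp) (v : Vtx) (lam : ℝ) :
    FieldSp → ℝ :=
  P[psiFld N M sigv lamv P v | scaleAlg N lam v]

/-- The increment `ψ_v(λ,λ') = ψ_v(λ') − ψ_v(λ)`. -/
def psiInc (N M : ℕ) (sigv lamv : ℕ → ℝ) (P : MeasureTheory.Measure FieldSp) (v : Vtx) (lam lam' : ℝ) :
    FieldSp → ℝ :=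
  fun ω => psiScale N M sigv lamv P v lam' ω - psiScale N M sigv lamv P v lam ω

/-- The step function `σ(s) = σ_1 1_{{0}}(s) + Σ_{i=1}^M σ_i 1_{(λ_{i−1},λ_i]}(s)`. -/
def stepFn (M : ℕ) (sigv lamv : ℕ → ℝ) (s : ℝ) : ℝ :=
  (if s = 0 then sigv 1 else 0) +
  ∑ i ∈ Finset.Icc 1 M, if lamv (i - 1) < s ∧ s ≤ lamv i then sigv i else 0

/-- `𝒥_f(s) = ∫_0^s f(r) dr`. -/
def Jint (f : ℝ → ℝ) (s : ℝ) : ℝ := ∫ r in (0:ℝ)..s, f r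

/-- `𝒥_f(s₁,s₂) = ∫_{s₁}^{s₂} f(r) dr`. -/
def Jint2 (f : ℝ → ℝ) (s₁ s₂ : ℝ) : ℝ := ∫ r in s₁..s₂, f r

/-- The speed function `𝒥_{σ²}`. -/
def Jsig2 (M : ℕ) (sigv lamv : ℕ → ℝ) (s : ℝ) : ℝ := Jint (fun r => (stepFn M sigv lamv r) ^ 2) s

/-- The normalized speed function `𝒥̄_{σ²} = 𝒥_{σ²}/𝒥_{σ²}(1)`. -/
def JsigBar (M : ℕ) (sigv lamv : ℕ → ℝ) (s : ℝ) : ℝ := Jsig2 M sigv lamv s / Jsig2 M sigv lamv 1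

/-- The concave hull on `[0,1]` of a function `f`, i.e. the pointwise infimum over all
concave functions dominating `f` on `[0,1]`. -/
def concaveHull (f : ℝ → ℝ) (s : ℝ) : ℝ :=
  sInf {y | ∃ g : ℝ → ℝ, ConcaveOn ℝ (Set.Icc (0:ℝ) 1) g ∧
    (∀ t ∈ Set.Icc (0:ℝ) 1, f t ≤ g t) ∧ y = g s}

/-- The effective parameters: jump scales `0 = λ⁰ < … < λ^m = 1`, values
`σ̄_1 > … > σ̄_m > 0`, and the left-continuous non-increasing step function `σ̄`
such that `∫_0^s σ̄²` is the concavification of `𝒥_{σ²}`. -/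
def EffParams (M : ℕ) (sigv lamv : ℕ → ℝ) (m : ℕ) (sigb lamb : ℕ → ℝ) (sigbar : ℝ → ℝ) : Prop :=
  1 ≤ m ∧ m ≤ M ∧ lamb 0 = 0 ∧ lamb m = 1 ∧ (∀ j, j < m → lamb j < lamb (j + 1)) ∧
  (∀ l, 1 ≤ l → l < m → sigb (l + 1) < sigb l) ∧ (∀ l ∈ Finset.Icc 1 m, 0 < sigb l) ∧
  sigbar 0 = sigb 1 ∧
  (∀ l ∈ Finset.Icc 1 m, ∀ s : ℝ, lamb (l - 1) < s → s ≤ lamb l → sigbar s = sigb l) ∧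
  (∀ s : ℝ, 0 < s → s ≤ 1 →
    concaveHull (Jsig2 M sigv lamv) s = ∫ r in (0:ℝ)..s, (sigbar r) ^ 2)

/-- `γ* = 𝒥_{σ²/σ̄}(1)`. -/
def gammaStar (M : ℕ) (sigv lamv : ℕ → ℝ) (sigbar : ℝ → ℝ) : ℝ :=
  ∫ s in (0:ℝ)..1, (stepFn M sigv lamv s) ^ 2 / sigbar s

/-- The critical levels `γ^l = ∫_0^1 σ²(s)/σ̄(s ∧ λ^l) ds`, `γ⁰ = 0`. -/
def gammaL (M : ℕ) (sigv lamv : ℕ → ℝ) (lamb : ℕ → ℝ) (sigbar : ℝ → ℝ) (l : ℕ) : ℝ :=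
  if l = 0 then 0 else ∫ s in (0:ℝ)..1, (stepFn M sigv lamv s) ^ 2 / sigbar (min s (lamb l))

/-- `EntE` is the entropy function `𝓔` of the model. -/
def IsEntropy (M : ℕ) (sigv lamv : ℕ → ℝ) (m : ℕ) (lamb : ℕ → ℝ) (sigbar : ℝ → ℝ)
    (EntE : ℝ → ℝ) : Prop :=
  EntE 0 = 1 ∧
  ∀ l ∈ Finset.Icc 1 m, ∀ γ : ℝ,
    gammaL M sigv lamv lamb sigbar (l - 1) < γ → γ ≤ gammaL M sigv lamv lamb sigbar l →
      EntE γ = (1 - lamb (l - 1)) -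
        (γ - ∫ s in (0:ℝ)..(lamb (l - 1)), (stepFn M sigv lamv s) ^ 2 / sigbar s) ^ 2 /
          Jint2 (fun r => (stepFn M sigv lamv r) ^ 2) (lamb (l - 1)) 1

/-- The limiting free energy of the `REM(σ)` model. -/
def fREM (σ β : ℝ) : ℝ :=
  if (2 / σ) < β then 2 * (β / (2 / σ)) else 1 + (β / (2 / σ)) ^ 2

/-- The index `l_β`. -/
def lbeta (m : ℕ) (sigb : ℕ → ℝ) (β : ℝ) : ℕ :=
  if β ≤ 2 / sigb m then sInf {l : ℕ | 1 ≤ l ∧ β ≤ 2 / sigb l} else m + 1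

/-- The limiting free energy `f^ψ(β)`, written with the `l_β` split. -/
def fpsiLim (m : ℕ) (sigb lamb : ℕ → ℝ) (β : ℝ) : ℝ :=
  (∑ j ∈ Finset.Icc 1 (lbeta m sigb β - 1), (2 * β / (2 / sigb j)) * (lamb j - lamb (j - 1))) +
  ∑ j ∈ Finset.Icc (lbeta m sigb β) m, (1 + β ^ 2 / (2 / sigb j) ^ 2) * (lamb j - lamb (j - 1))

/-- The set `ℬ` of non-critical inverse temperatures. -/
def critSet (m : ℕ) (sigb : ℕ → ℝ) : Set ℝ :=
  {β | 0 < β ∧ ∀ j ∈ Finset.Icc 1 m, β ≠ 2 / sigb j}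

/-- The partition function `Z_N^ψ(β)`. -/
def ZN (N M : ℕ) (sigv lamv : ℕ → ℝ) (P : MeasureTheory.Measure FieldSp) (β : ℝ) (ω : FieldSp) : ℝ :=
  ∑ v ∈ VN N, Real.exp (β * psiFld N M sigv lamv P v ω)

/-- The free energy `f_N^ψ(β)` on `V_N`. -/
def freeEnergy (N M : ℕ) (sigv lamv : ℕ → ℝ) (P : MeasureTheory.Measure FieldSp) (β : ℝ) (ω : FieldSp) : ℝ :=
  (Real.log ((N : ℝ) ^ 2))⁻¹ * Real.log (ZN N M sigv lamv P β ω)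

/-- The set `A_{N,ρ}` of points at distance at least `N^{1−ρ}` from `ℤ² ∖ V_N`. -/
def AN (N : ℕ) (ρ : ℝ) : Finset Vtx :=
  (VN N).filter fun v => ∀ z : Vtx, z ∉ VN N →
    (N : ℝ) ^ ((1 : ℝ) - ρ) ≤ Real.sqrt (((v.1 : ℝ) - (z.1 : ℝ)) ^ 2 + ((v.2 : ℝ) - (z.2 : ℝ)) ^ 2)

/-- The restricted partition function `Z_{N,ρ}^ψ(β)`. -/
def ZNres (N M : ℕ) (sigv lamv : ℕ → ℝ) (P : MeasureTheory.Measure FieldSp) (β ρ : ℝ) (ω : FieldSp) : ℝ :=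
  ∑ v ∈ AN N ρ, Real.exp (β * psiFld N M sigv lamv P v ω)

/-- The free energy `f_{N,ρ}^ψ(β)` on `A_{N,ρ}`. -/
def freeEnergyRes (N M : ℕ) (sigv lamv : ℕ → ℝ) (P : MeasureTheory.Measure FieldSp) (β ρ : ℝ)
    (ω : FieldSp) : ℝ :=
  (Real.log ((N : ℝ) ^ 2))⁻¹ * Real.log (ZNres N M sigv lamv P β ρ ω)

/-- The Gibbs weight `𝒢_{β,N}({v})`. -/
def gibbsW (N M : ℕ) (sigv lamv : ℕ → ℝ) (P : MeasureTheory.Measure FieldSp) (β : ℝ) (v : Vtx)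
    (ω : FieldSp) : ℝ :=
  Real.exp (β * psiFld N M sigv lamv P v ω) / ZN N M sigv lamv P β ω

/-- The restricted Gibbs weight `𝒢_{β,N,ρ}({v})`. -/
def gibbsWres (N M : ℕ) (sigv lamv : ℕ → ℝ) (P : MeasureTheory.Measure FieldSp) (β ρ : ℝ) (v : Vtx)
    (ω : FieldSp) : ℝ :=
  Real.exp (β * psiFld N M sigv lamv P v ω) / ZNres N M sigv lamv P β ρ ω

/-- `E𝒢_{β,N}^{×s}[F]`: the mean over the disorder of the `s`-fold Gibbs average of `F`. -/
def gibbsExp (N M : ℕ) (sigv lamv : ℕ → ℝ) (P : MeasureTheory.Measure FieldSp) (β : ℝ) (s : ℕ)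
    (F : (Fin s → Vtx) → ℝ) : ℝ :=
  ∫ ω, (∑ vv ∈ Fintype.piFinset (fun _ : Fin s => VN N),
    (∏ i, gibbsW N M sigv lamv P β (vv i) ω) * F vv) ∂P

/-- `E𝒢_{β,N,ρ}^{×s}[F]`, with an `ω`-dependent integrand allowed. -/
def gibbsExpRes (N M : ℕ) (sigv lamv : ℕ → ℝ) (P : MeasureTheory.Measure FieldSp) (β ρ : ℝ) (s : ℕ)
    (F : (Fin s → Vtx) → FieldSp → ℝ) : ℝ :=
  ∫ ω, (∑ vv ∈ Fintype.piFinset (fun _ : Fin s => AN N ρ),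
    (∏ i, gibbsWres N M sigv lamv P β ρ (vv i) ω) * F vv ω) ∂P

/-- `E𝒢_{β,N}^{×s}[F]`, with an `ω`-dependent integrand allowed. -/
def gibbsExpW (N M : ℕ) (sigv lamv : ℕ → ℝ) (P : MeasureTheory.Measure FieldSp) (β : ℝ) (s : ℕ)
    (F : (Fin s → Vtx) → FieldSp → ℝ) : ℝ :=
  ∫ ω, (∑ vv ∈ Fintype.piFinset (fun _ : Fin s => VN N),
    (∏ i, gibbsW N M sigv lamv P β (vv i) ω) * F vv ω) ∂P

/-- The covariance `E[ψ_v ψ_{v'}]`. -/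
def psiCov (N M : ℕ) (sigv lamv : ℕ → ℝ) (P : MeasureTheory.Measure FieldSp) (v v' : Vtx) : ℝ :=
  ∫ ω, psiFld N M sigv lamv P v ω * psiFld N M sigv lamv P v' ω ∂P

/-- `C₀` is a constant witnessing the uniform variance upper bound
`max_{v∈V_N} E[ψ_v²] ≤ 𝒥_{σ²}(1) log N + C₀` for `N` large. -/
def IsVarBound (M : ℕ) (sigv lamv : ℕ → ℝ) (P : ℕ → MeasureTheory.Measure FieldSp) (C₀ : ℝ) : Prop :=
  0 < C₀ ∧ ∃ N₀ : ℕ, ∀ N ≥ N₀, ∀ v ∈ VN N,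
    psiCov N M sigv lamv (P N) v v ≤ Jsig2 M sigv lamv 1 * Real.log N + C₀

/-- The overlap `q^N(v,v')`. -/
def overlapQ (N M : ℕ) (sigv lamv : ℕ → ℝ) (P : MeasureTheory.Measure FieldSp) (C₀ : ℝ) (v v' : Vtx) : ℝ :=
  psiCov N M sigv lamv P v v' / (Jsig2 M sigv lamv 1 * Real.log N + C₀)

/-- Convergence in probability to a constant, for a sequence of random variables on a
sequence of probability spaces. -/
def TendstoInProb (P : ℕ → MeasureTheory.Measure FieldSp) (X : ℕ → FieldSp → ℝ) (c : ℝ) : Prop :=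
  ∀ ε : ℝ, 0 < ε → Tendsto (fun N => P N {ω | ε < |X N ω - c|}) atTop (nhds 0)

/-- Convergence in `L^p` to a constant. -/
def TendstoLp (P : ℕ → MeasureTheory.Measure FieldSp) (X : ℕ → FieldSp → ℝ) (p c : ℝ) : Prop :=
  Tendsto (fun N => ∫ ω, |X N ω - c| ^ p ∂(P N)) atTop (nhds 0)

/-- The branching scale `b_N(v,v')`. -/
def bScale (N : ℕ) (v v' : Vtx) : ℝ :=
  sSup {lam : ℝ | lam ∈ Set.Icc (0:ℝ) 1 ∧ ((nbhd N lam v) ∩ (nbhd N lam v')).Nonempty}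

end GFFCommon


/-- Sum over the four neighbours. -/
noncomputable def nbS (f : Vtx → ℝ) (x : Vtx) : ℝ :=
  f (x.1 + 1, x.2) + f (x.1 - 1, x.2) + f (x.1, x.2 + 1) + f (x.1, x.2 - 1)

/-- Green kernel with pole `v` killed off `S`. -/
def IsKer (S : Finset Vtx) (v : Vtx) (g : Vtx → ℝ) : Prop :=
  (∀ x, x ∉ S → g x = 0) ∧
  ∀ x ∈ S, g x = nbS g x / 4 + (Real.pi / 2) * (if x = v then 1 else 0)

theorem min_princ (S : Finset Vtx) (g : Vtx → ℝ) (h0 : ∀ x, x ∉ S → 0 ≤ g x)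
    (h1 : ∀ x ∈ S, nbS g x / 4 ≤ g x) : ∀ x, 0 ≤ g x := by
  by_contra! hneg
  obtain ⟨y, hy⟩ := hneg
  have hyS : y ∈ S := by
    by_contra h
    exact absurd (h0 y h) (not_le.mpr hy)
  obtain ⟨m, hmS, hm⟩ := Finset.exists_min_image S g ⟨y, hyS⟩
  have hmneg : g m < 0 := lt_of_le_of_lt (hm y hyS) hy
  have hall : ∀ x, g m ≤ g x := by
    intro x
    by_cases hx : x ∈ S
    · exact hm x hx
    · exact le_trans hmneg.le (h0 x hx)
  obtain ⟨z, hz, hzmax⟩ := Finset.exists_max_image (S.filter fun x => g x = g m) (fun x => x.1)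
    ⟨m, by simp [hmS]⟩
  rw [Finset.mem_filter] at hz
  have h := h1 z hz.1
  unfold nbS at h
  have a1 := hall (z.1 + 1, z.2)
  have a2 := hall (z.1 - 1, z.2)
  have a3 := hall (z.1, z.2 + 1)
  have a4 := hall (z.1, z.2 - 1)
  have e : g (z.1 + 1, z.2) = g m := by linarith [hz.2]
  have hzS : ((z.1 + 1, z.2) : Vtx) ∈ S := by
    by_contra hh
    linarith [h0 _ hh]
  have := hzmax (z.1 + 1, z.2) (by simp [hzS, e])
  simp at this

theorem nbS_sub (f g : Vtx → ℝ) (x : Vtx) : nbS (fun y => f y - g y) x = nbS f x - nbS g x := by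
  unfold nbS; ring

theorem IsKer.nonneg {S : Finset Vtx} {v : Vtx} {g : Vtx → ℝ} (h : IsKer S v g) (x : Vtx) :
    0 ≤ g x := by
  refine min_princ S g (fun x hx => (h.1 x hx).ge) (fun x hx => ?_) x
  rw [h.2 x hx]
  have : 0 ≤ (Real.pi / 2) * (if x = v then (1:ℝ) else 0) := by
    have := Real.pi_pos
    split_ifs <;> positivity
  conv_lhs => rw [show nbS g x / 4 = nbS g x / 4 + 0 by ring]
  gcongr

theorem IsKer.mono {S T : Finset Vtx} (hST : S ⊆ T) {v : Vtx} {g g' : Vtx → ℝ} (h : IsKer S v g)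
    (h' : IsKer T v g') (x : Vtx) : g x ≤ g' x := by
  have := min_princ S (fun y => g' y - g y) (fun y hy => by
    simp only [h.1 y hy, sub_zero]; exact h'.nonneg y) (fun y hy => by
    rw [nbS_sub]
    have e1 := h.2 y hy
    have e2 := h'.2 y (hST hy)
    linarith) x
  linarith

theorem IsKer.exists (S : Finset Vtx) (v : Vtx) : ∃ g, IsKer S v g := by
  let ext : (S → ℝ) → Vtx → ℝ := fun f x => if h : x ∈ S then f ⟨x, h⟩ else 0
  have ext_add : ∀ f g x, ext (f + g) x = ext f x + ext g x := by
    intro f g x; simp only [ext]; split_ifs <;> simp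
  have ext_smul : ∀ (c : ℝ) f x, ext (c • f) x = c * ext f x := by
    intro f g x; simp only [ext]; split_ifs <;> simp
  let A : (S → ℝ) →ₗ[ℝ] (S → ℝ) :=
    { toFun := fun f x => ext f x - nbS (ext f) x / 4
      map_add' := by
        intro f g; funext x; simp only [nbS, ext_add, Pi.add_apply]; ring
      map_smul' := by
        intro c f; funext x
        simp only [nbS, ext_smul, Pi.smul_apply, smul_eq_mul, RingHom.id_apply]; ring }
  have hpos : ∀ f, A f = 0 → ∀ x, 0 ≤ ext f x := by
    intro f hf
    refine min_princ S _ (fun x hx => by simp [ext, hx]) (fun x hx => ?_)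
    have := congrFun hf ⟨x, hx⟩
    simp only [A, LinearMap.coe_mk, AddHom.coe_mk, Pi.zero_apply] at this
    linarith
  have hinj : Function.Injective A := by
    rw [← LinearMap.ker_eq_bot, LinearMap.ker_eq_bot']
    intro f hf
    funext x
    have h1 := hpos f hf x
    have h2 := hpos ((-1 : ℝ) • f) (by rw [map_smul, hf, smul_zero]) x
    rw [ext_smul] at h2
    have : ext f x = f x := by simp [ext]
    simp only [Pi.zero_apply]
    linarith
  have hsurj := LinearMap.injective_iff_surjective.mp hinj
  obtain ⟨f, hf⟩ := hsurj (fun x => (Real.pi / 2) * (if (x : Vtx) = v then 1 else 0))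
  refine ⟨ext f, fun x hx => by simp [ext, hx], fun x hx => ?_⟩
  have := congrFun hf ⟨x, hx⟩
  simp only [A, LinearMap.coe_mk, AddHom.coe_mk] at this
  linarith

theorem IsKer.eq_zero {S : Finset Vtx} {v : Vtx} (hv : v ∉ S) {g : Vtx → ℝ} (h : IsKer S v g)
    (x : Vtx) : g x = 0 := by
  refine le_antisymm ?_ (h.nonneg x)
  have := min_princ S (fun y => 0 - g y) (fun y hy => by simp [h.1 y hy]) (fun y hy => by
    rw [nbS_sub]
    have e1 := h.2 y hy
    have : y ≠ v := fun e => hv (e ▸ hy)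
    simp only [this, if_false, mul_zero] at e1
    have : nbS (fun _ => (0:ℝ)) y = 0 := by simp [nbS]
    linarith) x
  linarith

/-- Summation by parts. -/
theorem nbS_symm (f g : Vtx → ℝ) (hf : f.support.Finite) (hg : g.support.Finite) :
    ∑' x, nbS f x * g x = ∑' x, f x * nbS g x := by
  have key : ∀ e : Vtx ≃ Vtx, ∑' x, f (e x) * g x = ∑' x, f x * g (e.symm x) := by
    intro e
    rw [← e.tsum_eq (fun x => f x * g (e.symm x))]
    simp
  have sm1 : ∀ e : Vtx → Vtx, Summable (fun x => f (e x) * g x) := by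
    intro e
    refine summable_of_hasFiniteSupport (hg.subset ?_)
    intro x hx; simp only [Function.mem_support] at hx ⊢
    exact right_ne_zero_of_mul hx
  have sm2 : ∀ e : Vtx → Vtx, Summable (fun x => f x * g (e x)) := by
    intro e
    refine summable_of_hasFiniteSupport (hf.subset ?_)
    intro x hx; simp only [Function.mem_support] at hx ⊢
    exact left_ne_zero_of_mul hx
  let e1 : Vtx ≃ Vtx := ⟨fun x => (x.1 + 1, x.2), fun x => (x.1 - 1, x.2),
    fun x => by simp, fun x => by simp⟩
  let e2 : Vtx ≃ Vtx := ⟨fun x => (x.1, x.2 + 1), fun x => (x.1, x.2 - 1),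
    fun x => by simp, fun x => by simp⟩
  have k1 := key e1
  have k2 := key e1.symm
  have k3 := key e2
  have k4 := key e2.symm
  have t1 : ∀ x, nbS f x * g x = f (e1 x) * g x + f (e1.symm x) * g x + f (e2 x) * g x
      + f (e2.symm x) * g x := by
    intro x; simp only [nbS, e1, e2, Equiv.coe_fn_mk, Equiv.coe_fn_symm_mk]; ring
  have t2 : ∀ x, f x * nbS g x = f x * g (e1 x) + f x * g (e1.symm x) + f x * g (e2 x)
      + f x * g (e2.symm x) := by
    intro x; simp only [nbS, e1, e2, Equiv.coe_fn_mk, Equiv.coe_fn_symm_mk]; ring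
  rw [tsum_congr t1, tsum_congr t2]
  rw [((((sm1 e1).add (sm1 e1.symm)).add (sm1 e2))).tsum_add (sm1 e2.symm),
    (((sm1 e1).add (sm1 e1.symm))).tsum_add (sm1 e2), (sm1 e1).tsum_add (sm1 e1.symm),
    ((((sm2 e1).add (sm2 e1.symm)).add (sm2 e2))).tsum_add (sm2 e2.symm),
    (((sm2 e1).add (sm2 e1.symm))).tsum_add (sm2 e2), (sm2 e1).tsum_add (sm2 e1.symm)]
  simp only [Equiv.symm_symm] at k1 k2 k3 k4
  linarith


/-- frequency -/
noncomputable def tk (L k : ℕ) : ℝ := Real.pi * (2 * k + 1) / (2 * L)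
/-- decay rate -/
noncomputable def thk (L k : ℕ) : ℝ := 2 * Real.arsinh (Real.sin (tk L k / 2))

theorem tk_pos {L k : ℕ} (hk : k < L) : 0 < tk L k := by
  have : (0:ℝ) < L := by exact_mod_cast (Nat.zero_le k).trans_lt hk
  have := Real.pi_pos
  unfold tk; positivity

theorem tk_lt {L k : ℕ} (hk : k < L) : tk L k < Real.pi := by
  have h : (0:ℝ) < L := by exact_mod_cast (Nat.zero_le k).trans_lt hk
  have := Real.pi_pos
  unfold tk
  rw [div_lt_iff₀ (by positivity)]
  have : ((k:ℝ) + 1) ≤ L := by exact_mod_cast hk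
  nlinarith

theorem sk_pos {L k : ℕ} (hk : k < L) : 0 < Real.sin (tk L k / 2) :=
  Real.sin_pos_of_pos_of_lt_pi (by linarith [tk_pos hk]) (by linarith [tk_lt hk, tk_pos hk])

theorem thk_pos {L k : ℕ} (hk : k < L) : 0 < thk L k := by
  unfold thk
  have := Real.arsinh_pos_iff.mpr (sk_pos hk)
  linarith

theorem cosh_thk (L k : ℕ) : Real.cosh (thk L k) = 2 - Real.cos (tk L k) := by
  unfold thk
  rw [Real.cosh_two_mul, Real.cosh_sq, Real.sinh_arsinh]
  have : Real.cos (tk L k) = 1 - 2 * Real.sin (tk L k / 2) ^ 2 := by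
    conv_lhs => rw [show tk L k = 2 * (tk L k / 2) by ring, Real.cos_two_mul]
    have := Real.sin_sq_add_cos_sq (tk L k / 2)
    linarith
  rw [this]; ring

theorem sinh_thk (L k : ℕ) : Real.sinh (thk L k)
    = 2 * Real.sin (tk L k / 2) * Real.sqrt (1 + Real.sin (tk L k / 2) ^ 2) := by
  unfold thk
  rw [Real.sinh_two_mul, Real.cosh_arsinh, Real.sinh_arsinh]

theorem sum_cos_odd (L : ℕ) (φ : ℝ) :
    2 * Real.sin φ * ∑ k ∈ Finset.range L, Real.cos ((2 * k + 1) * φ) = Real.sin (2 * L * φ) := by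
  induction L with
  | zero => simp
  | succ n ih =>
    rw [Finset.sum_range_succ, mul_add, ih]
    push_cast
    have e1 : 2 * ((n:ℝ) + 1) * φ = (2 * n + 1) * φ + φ := by ring
    have e2 : 2 * (n:ℝ) * φ = (2 * n + 1) * φ - φ := by ring
    rw [e1, e2, Real.sin_add, Real.sin_sub]; ring

theorem sum_cos_tk (L : ℕ) (y : ℤ) (hy : |y| < L) :
    ∑ k ∈ Finset.range L, Real.cos (tk L k * y) = if y = 0 then (L:ℝ) else 0 := by
  split_ifs with h
  · simp [h]
  · have hL : (0:ℝ) < L := by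
      have : (0:ℤ) < L := lt_of_le_of_lt (abs_nonneg y) hy
      exact_mod_cast this
    have := sum_cos_odd L (Real.pi * y / (2 * L))
    have e : 2 * L * (Real.pi * y / (2 * L)) = y * Real.pi := by field_simp
    rw [e, Real.sin_int_mul_pi] at this
    have hs : Real.sin (Real.pi * y / (2 * L)) ≠ 0 := by
      have hpi := Real.pi_pos
      have hyr : |(y:ℝ)| < L := by exact_mod_cast hy
      rw [abs_lt] at hyr
      intro h0
      rw [Real.sin_eq_zero_iff_of_lt_of_lt] at h0
      · have : (y:ℝ) ≠ 0 := by exact_mod_cast h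
        field_simp at h0
        exact this (by nlinarith)
      · rw [lt_div_iff₀ (by positivity)]; nlinarith
      · rw [div_lt_iff₀ (by positivity)]; nlinarith
    have h2 : ∑ k ∈ Finset.range L, Real.cos ((2 * k + 1) * (Real.pi * y / (2 * L))) = 0 := by
      rcases mul_eq_zero.mp this with h3 | h3
      · exact absurd (by linarith) hs
      · exact h3
    rw [← h2]
    refine Finset.sum_congr rfl fun k _ => ?_
    congr 1; unfold tk; field_simp

/-- one-dimensional kernel -/
noncomputable def uk (θ : ℝ) (W d x : ℤ) : ℝ :=
  Real.sinh (θ * (min x d : ℤ)) * Real.sinh (θ * (W - max x d : ℤ)) /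
    (Real.sinh θ * Real.sinh (θ * W))

theorem uk_zero (θ : ℝ) (W d : ℤ) (hd : 0 < d) : uk θ W d 0 = 0 := by
  unfold uk; rw [min_eq_left hd.le]; simp

theorem uk_W (θ : ℝ) (W d : ℤ) (hd : d < W) : uk θ W d W = 0 := by
  unfold uk; rw [max_eq_left hd.le]; simp

theorem uk_eq (θ : ℝ) (hθ : 0 < θ) (W d x : ℤ) (hd : 0 < d) (hdW : d < W) :
    uk θ W d (x + 1) + uk θ W d (x - 1) = 2 * Real.cosh θ * uk θ W d x - if x = d then 1 else 0 := by
  have h1 : Real.sinh θ ≠ 0 := (Real.sinh_pos_iff.mpr hθ).ne'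
  have hW : (0:ℝ) < W := by exact_mod_cast hd.trans hdW
  have h2 : Real.sinh (θ * W) ≠ 0 := (Real.sinh_pos_iff.mpr (by positivity)).ne'
  unfold uk
  rcases lt_trichotomy x d with h | h | h
  · rw [min_eq_left (by omega), min_eq_left (by omega), min_eq_left (by omega),
      max_eq_right (by omega), max_eq_right (by omega), max_eq_right (by omega), if_neg (by omega)]
    push_cast
    rw [mul_add, mul_sub θ (x:ℝ) 1, mul_one, Real.sinh_add, Real.sinh_sub]
    field_simp; ring
  · subst h
    rw [min_eq_right (by omega), min_eq_left (by omega), min_eq_left (by omega),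
      max_eq_left (by omega), max_eq_right (by omega), max_eq_right (by omega), if_pos rfl]
    push_cast
    have e1 : θ * ((W:ℝ) - (x + 1)) = θ * (W - x) - θ := by ring
    have e2 : θ * (W:ℝ) = θ * (W - x) + θ * x := by ring
    have e3 : θ * ((x:ℝ) - 1) = θ * x - θ := by ring
    have h3 : Real.sinh (θ * (W - x) + θ * x) ≠ 0 := by rw [← e2]; exact h2
    rw [e1, e2, e3]
    rw [Real.sinh_add] at h3 ⊢
    rw [Real.sinh_sub, Real.sinh_sub]
    generalize Real.sinh (θ * (W - x)) = a at *
    generalize Real.cosh (θ * (W - x)) = b at *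
    generalize Real.sinh (θ * x) = c at *
    generalize Real.cosh (θ * x) = e at *
    generalize hD : a * e + b * c = D at *
    field_simp; rw [← hD]; ring
  · rw [min_eq_right (by omega), min_eq_right (by omega), min_eq_right (by omega),
      max_eq_left (by omega), max_eq_left (by omega), max_eq_left (by omega), if_neg (by omega)]
    push_cast
    have e1 : θ * ((W:ℝ) - (x + 1)) = θ * (W - x) - θ := by ring
    have e3 : θ * ((W:ℝ) - (x - 1)) = θ * (W - x) + θ := by ring
    rw [e1, e3, Real.sinh_sub, Real.sinh_add]
    field_simp; ring

/-- The explicit rectangle kernel. -/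
noncomputable def Rk (W d : ℤ) (L : ℕ) (x y : ℤ) : ℝ :=
  (2 * Real.pi / L) * ∑ k ∈ Finset.range L, Real.cos (tk L k * y) * uk (thk L k) W d x

/-- the open rectangle -/
noncomputable def rect (W : ℤ) (L : ℕ) : Set Vtx := {p | 0 < p.1 ∧ p.1 < W ∧ |p.2| < L}

noncomputable def Rf (W d : ℤ) (L : ℕ) (p : Vtx) : ℝ := if p ∈ rect W L then Rk W d L p.1 p.2 else 0

theorem Rk_y (W d : ℤ) (L : ℕ) (x y : ℤ) (hy : |y| = L) (hL : 0 < L) : Rk W d L x y = 0 := by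
  unfold Rk
  rw [Finset.sum_eq_zero, mul_zero]
  intro k _
  have h : Real.cos (tk L k * y) = Real.cos (tk L k * L) := by
    have hr : |(y:ℝ)| = L := by exact_mod_cast hy
    rcases (abs_eq (by positivity)).mp hr with h | h
    · rw [h]
    · rw [h, mul_neg, Real.cos_neg]
  have hL' : (L:ℝ) ≠ 0 := by positivity
  have : tk L k * L = (2 * (k:ℤ) + 1) * Real.pi / 2 := by unfold tk; field_simp; push_cast; ring
  rw [h, Real.cos_eq_zero_iff.mpr ⟨k, this⟩, zero_mul]

theorem Rk_eq (W d : ℤ) (L : ℕ) (x y : ℤ) (hd : 0 < d) (hdW : d < W) (hy : |y| < L) :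
    Rk W d L x y = (Rk W d L (x + 1) y + Rk W d L (x - 1) y + Rk W d L x (y + 1)
      + Rk W d L x (y - 1)) / 4 + (Real.pi / 2) * (if x = d ∧ y = 0 then 1 else 0) := by
  have hL : (0:ℝ) < L := by
    have : (0:ℤ) < L := lt_of_le_of_lt (abs_nonneg y) hy
    exact_mod_cast this
  have hs := sum_cos_tk L y hy
  unfold Rk
  have : ∀ k ∈ Finset.range L,
      Real.cos (tk L k * y) * uk (thk L k) W d (x + 1) + Real.cos (tk L k * y) * uk (thk L k) W d (x - 1)
      + Real.cos (tk L k * (y + 1 : ℤ)) * uk (thk L k) W d x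
      + Real.cos (tk L k * (y - 1 : ℤ)) * uk (thk L k) W d x
      = 4 * (Real.cos (tk L k * y) * uk (thk L k) W d x)
        - (if x = d then 1 else 0) * Real.cos (tk L k * y) := by
    intro k hk
    have hu := uk_eq (thk L k) (thk_pos (Finset.mem_range.mp hk)) W d x hd hdW
    rw [cosh_thk] at hu
    push_cast
    rw [mul_add, mul_sub, mul_one, Real.cos_add, Real.cos_sub]
    linear_combination Real.cos (tk L k * y) * hu
  have h2 := Finset.sum_congr rfl this
  rw [Finset.sum_add_distrib, Finset.sum_add_distrib, Finset.sum_add_distrib,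
    Finset.sum_sub_distrib, ← Finset.mul_sum, ← Finset.mul_sum, hs] at h2
  rw [← mul_add, ← mul_add, ← mul_add, h2]
  generalize ∑ k ∈ Finset.range L, Real.cos (tk L k * y) * uk (thk L k) W d x = Q
  by_cases hx : x = d <;> by_cases hy0 : y = 0 <;> simp [hx, hy0] <;> field_simp <;> ring

theorem Rf_eq (W d : ℤ) (L : ℕ) (hd : 0 < d) (hdW : d < W) (p : Vtx) (hp : p ∈ rect W L) :
    Rf W d L p = nbS (Rf W d L) p / 4 + (Real.pi / 2) * (if p = (d, 0) then 1 else 0) := by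
  obtain ⟨x, y⟩ := p
  have hp' := hp
  obtain ⟨h1, h2, h3⟩ := hp
  simp only at h1 h2 h3
  have hLpos : 0 < L := by
    have : (0:ℤ) < L := lt_of_le_of_lt (abs_nonneg y) h3
    exact_mod_cast this
  rw [abs_lt] at h3
  have ext : ∀ x' y' : ℤ, 0 ≤ x' → x' ≤ W → |y'| ≤ L → Rf W d L (x', y') = Rk W d L x' y' := by
    intro x' y' a b c
    unfold Rf
    split_ifs with h
    · rfl
    · have : x' = 0 ∨ x' = W ∨ |y'| = L := by
        by_contra! hcon
        refine h ⟨lt_of_le_of_ne a hcon.1.symm, lt_of_le_of_ne b hcon.2.1, lt_of_le_of_ne c hcon.2.2⟩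
      rcases this with h | h | h
      · simp [Rk, h, uk_zero _ W d hd]
      · simp [Rk, h, uk_W _ W d hdW]
      · rw [Rk_y _ _ _ _ _ h hLpos]
  simp only [nbS]
  rw [ext x y h1.le h2.le (by rw [abs_le]; omega), ext (x+1) y (by omega) (by omega) (by rw [abs_le]; omega),
    ext (x-1) y (by omega) (by omega) (by rw [abs_le]; omega),
    ext x (y+1) (by omega) (by omega) (by rw [abs_le]; omega),
    ext x (y-1) (by omega) (by omega) (by rw [abs_le]; omega),
    Rk_eq W d L x y hd hdW (by rw [abs_lt]; omega)]
  simp [Prod.ext_iff]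


theorem inv_sin_le {a : ℝ} (h0 : 0 < a) (h1 : a ≤ Real.pi / 2) : 1 / Real.sin a ≤ 1 / a + 2 := by
  have hs : 0 < Real.sin a := Real.sin_pos_of_pos_of_lt_pi h0 (by linarith [Real.pi_pos])
  have key : a ≤ (1 + 2 * a) * Real.sin a := by
    rcases le_or_gt a 1 with h | h
    · have := Real.sin_gt_sub_cube h0
      have h3 : a ≤ (1 + 2 * a) * (a - a ^ 3 / 6) := by
        have e : (1 + 2 * a) * (a - a ^ 3 / 6) = a + a ^ 2 * (2 - a / 6 - a ^ 2 / 3) := by ring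
        rw [e]
        have : 0 ≤ a ^ 2 * (2 - a / 6 - a ^ 2 / 3) := by
          apply mul_nonneg (by positivity); nlinarith
        linarith
      refine h3.trans ?_
      gcongr
    · have h2 := Real.mul_le_sin h0.le h1
      have hp := Real.pi_lt_four
      have hp0 := Real.pi_pos
      have h4 : 1 / 2 ≤ 2 / Real.pi := by rw [div_le_div_iff₀ (by norm_num) hp0]; linarith
      have : 1 / 2 * a ≤ Real.sin a := le_trans (by gcongr) h2
      nlinarith
  rw [show 1 / a + 2 = (1 + 2 * a) / a by field_simp, div_le_div_iff₀ hs h0]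
  linarith

theorem inv_sinh_le {L k : ℕ} (hk : k < L) :
    1 / (2 * Real.sinh (thk L k)) ≤ 1 / (2 * tk L k) + 1 / 2 := by
  have hs := sk_pos hk
  have ht := tk_pos hk
  have h1 := inv_sin_le (a := tk L k / 2) (by linarith) (by linarith [tk_lt hk])
  have h2 : 2 * Real.sin (tk L k / 2) ≤ Real.sinh (thk L k) := by
    rw [sinh_thk]
    have : 1 ≤ Real.sqrt (1 + Real.sin (tk L k / 2) ^ 2) := by
      rw [Real.one_le_sqrt]; nlinarith
    nlinarith
  calc 1 / (2 * Real.sinh (thk L k)) ≤ 1 / (2 * (2 * Real.sin (tk L k / 2))) := by gcongr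
    _ = (1 / Real.sin (tk L k / 2)) / 4 := by field_simp; norm_num
    _ ≤ (1 / (tk L k / 2) + 2) / 4 := by gcongr
    _ = _ := by field_simp; ring

theorem uk_le_inv {θ : ℝ} (hθ : 0 < θ) (W d : ℤ) (hd : 0 < d) (hdW : d < W) :
    uk θ W d d ≤ 1 / (2 * Real.sinh θ) := by
  have h1 : 0 < Real.sinh θ := Real.sinh_pos_iff.mpr hθ
  have hdr : (0:ℝ) < d := by exact_mod_cast hd
  have hWr : (0:ℝ) < (W:ℝ) - d := by
    have : (d:ℝ) < W := by exact_mod_cast hdW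
    linarith
  have hA : 0 < Real.sinh (θ * d) := Real.sinh_pos_iff.mpr (by positivity)
  have hB : 0 < Real.sinh (θ * (W - d)) := Real.sinh_pos_iff.mpr (by positivity)
  have e : θ * (W:ℝ) = θ * d + θ * (W - d) := by ring
  have hW : Real.sinh (θ * W) = Real.sinh (θ * d) * Real.cosh (θ * (W - d))
      + Real.cosh (θ * d) * Real.sinh (θ * (W - d)) := by rw [e, Real.sinh_add]
  have c1 := Real.sinh_lt_cosh (x := θ * d)
  have c2 := Real.sinh_lt_cosh (x := θ * (W - d))
  have hW0 : 0 < Real.sinh (θ * W) := by rw [hW]; positivity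
  unfold uk
  rw [min_self, max_self]
  push_cast
  rw [div_le_div_iff₀ (by positivity) (by positivity), hW]
  nlinarith [mul_pos hA h1, mul_pos hB h1, mul_le_mul_of_nonneg_left c2.le (mul_pos hA h1).le,
    mul_le_mul_of_nonneg_left c1.le (mul_pos hB h1).le]

theorem sinh_nat_le {θ : ℝ} (hθ : 0 < θ) (d : ℕ) :
    Real.sinh (θ * d) ≤ d * Real.sinh θ * Real.cosh (θ * d) := by
  have h1 : 0 < Real.sinh θ := Real.sinh_pos_iff.mpr hθ
  induction d with
  | zero => simp
  | succ n ih =>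
    push_cast
    rw [mul_add, mul_one, Real.sinh_add, Real.cosh_add]
    have hs : 0 ≤ Real.sinh (θ * n) := Real.sinh_nonneg_iff.mpr (by positivity)
    have c1 := Real.one_le_cosh θ
    have c2 := Real.cosh_pos (θ * n)
    calc Real.sinh (θ * n) * Real.cosh θ + Real.cosh (θ * n) * Real.sinh θ
        ≤ (n * Real.sinh θ * Real.cosh (θ * n)) * Real.cosh θ
          + (Real.cosh (θ * n) * Real.cosh θ) * Real.sinh θ := by
          gcongr
          nlinarith
      _ = ((n:ℝ) + 1) * Real.sinh θ * (Real.cosh (θ * n) * Real.cosh θ) := by ring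
      _ ≤ _ := by
        gcongr
        have := mul_nonneg hs h1.le
        linarith

theorem uk_le_d {θ : ℝ} (hθ : 0 < θ) (W : ℤ) (d : ℕ) (hd : 0 < d) (hdW : (d:ℤ) < W) :
    uk θ W d d ≤ d := by
  have h1 : 0 < Real.sinh θ := Real.sinh_pos_iff.mpr hθ
  have hdr : (0:ℝ) < d := by exact_mod_cast hd
  have hWr : (0:ℝ) < (W:ℝ) - d := by
    have : (d:ℝ) < W := by exact_mod_cast hdW
    linarith
  have hA : 0 < Real.sinh (θ * d) := Real.sinh_pos_iff.mpr (by positivity)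
  have hB : 0 < Real.sinh (θ * (W - d)) := Real.sinh_pos_iff.mpr (by positivity)
  have e : θ * (W:ℝ) = θ * d + θ * (W - d) := by ring
  have hW : Real.sinh (θ * W) = Real.sinh (θ * d) * Real.cosh (θ * (W - d))
      + Real.cosh (θ * d) * Real.sinh (θ * (W - d)) := by rw [e, Real.sinh_add]
  have hW0 : 0 < Real.sinh (θ * W) := by rw [hW]; positivity
  have := sinh_nat_le hθ d
  have hc := Real.cosh_pos (θ * (W - d))
  unfold uk
  rw [min_self, max_self]
  push_cast
  rw [div_le_iff₀ (by positivity), hW]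
  calc _ ≤ (d * Real.sinh θ * Real.cosh (θ * d)) * Real.sinh (θ * (W - d)) := by gcongr
    _ = d * (Real.sinh θ * (Real.cosh (θ * d) * Real.sinh (θ * (W - d)))) := by ring
    _ ≤ _ := by
      gcongr
      have := mul_pos hA hc
      linarith

theorem sum_odd_le (m L : ℕ) (hm : 0 < m) (hmL : m ≤ L) :
    ∑ k ∈ Finset.Ico m L, 2 / (2 * (k:ℝ) + 1) ≤ Real.log (L / m) := by
  induction L, hmL using Nat.le_induction with
  | base => simp
  | succ n hmn ih =>
    have hm' : (0:ℝ) < m := by exact_mod_cast hm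
    have hn : (0:ℝ) < n := by exact_mod_cast (hm.trans_le hmn)
    rw [Finset.sum_Ico_succ_top hmn]
    have := Real.le_log_one_add_of_nonneg (x := 1 / (n:ℝ)) (by positivity)
    have e : 2 * (1 / (n:ℝ)) / (1 / n + 2) = 2 / (2 * n + 1) := by field_simp; ring
    have e2 : ((n + 1 : ℕ) : ℝ) / m = (n / m) * (1 + 1 / n) := by push_cast; field_simp
    rw [e2, Real.log_mul (by positivity) (by positivity)]
    linarith

theorem le_sum_odd (n : ℕ) :
    Real.log (n + 1) ≤ ∑ k ∈ Finset.range n, 2 / (2 * (k:ℝ) + 1) := by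
  induction n with
  | zero => simp
  | succ n ih =>
    rw [Finset.sum_range_succ]
    have hn : (0:ℝ) ≤ n := by positivity
    have e2 : ((n + 1 : ℕ) : ℝ) + 1 = (n + 1) * (1 + 1 / (n + 1)) := by push_cast; field_simp
    rw [e2, Real.log_mul (by positivity) (by positivity)]
    have h := Real.log_le_sub_one_of_pos (x := 1 + 1 / ((n:ℝ) + 1)) (by positivity)
    have h3 : 1 / ((n:ℝ) + 1) ≤ 2 / (2 * (n:ℝ) + 1) := by
      rw [div_le_div_iff₀ (by positivity) (by positivity)]; linarith
    linarith

theorem sum_sq_le (n : ℕ) : ∑ k ∈ Finset.range n, 1 / (2 * (k:ℝ) + 1) ^ 2 ≤ 2 := by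
  suffices h : ∀ n : ℕ, ∑ k ∈ Finset.range (n + 1), 1 / (2 * (k:ℝ) + 1) ^ 2 ≤ 2 - 1 / ((n:ℝ) + 1) by
    cases n with
    | zero => simp
    | succ n =>
      have := h n
      have h2 : 0 ≤ 1 / ((n:ℝ) + 1) := by positivity
      linarith
  intro n
  induction n with
  | zero => norm_num
  | succ n ih =>
    rw [Finset.sum_range_succ]
    have : 1 / (2 * ((n + 1 : ℕ):ℝ) + 1) ^ 2 ≤ 1 / ((n:ℝ) + 1) - 1 / (((n + 1 : ℕ) : ℝ) + 1) := by
      push_cast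
      have hn : (0:ℝ) ≤ n := by positivity
      have e : 1 / ((n:ℝ) + 1) - 1 / ((n:ℝ) + 1 + 1) = 1 / (((n:ℝ) + 1) * (n + 2)) := by
        field_simp; ring
      rw [e]
      apply one_div_le_one_div_of_le (by positivity)
      nlinarith
    linarith

theorem Rk_le (W : ℤ) (d L : ℕ) (hd : 0 < d) (hdW : (d:ℤ) < W) (hdL : d ≤ L) :
    Rk W d L d 0 ≤ Real.log d + 16 * Real.pi := by
  have hpi := Real.pi_pos
  have hL : (0:ℝ) < L := by exact_mod_cast hd.trans_le hdL
  have hdr : (1:ℝ) ≤ d := by exact_mod_cast hd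
  have hdL' : (d:ℝ) ≤ L := by exact_mod_cast hdL
  set m := ⌈(L:ℝ) / d⌉₊ with hm
  have hLd : 1 ≤ (L:ℝ) / d := by rw [le_div_iff₀ (by positivity)]; linarith
  have hm1 : (L:ℝ) / d ≤ m := Nat.le_ceil _
  have hm2 : (m:ℝ) < L / d + 1 := Nat.ceil_lt_add_one (by positivity)
  have hm0 : 0 < m := by
    have : (0:ℝ) < m := by linarith
    exact_mod_cast this
  have hmL : m ≤ L := by
    rw [hm, Nat.ceil_le]
    exact div_le_self hL.le hdr
  unfold Rk
  simp only [Int.cast_zero, mul_zero, Real.cos_zero, one_mul]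
  rw [← Finset.sum_range_add_sum_Ico _ hmL]
  have s1 : ∑ k ∈ Finset.range m, uk (thk L k) W d d ≤ m * d := by
    have : ∑ k ∈ Finset.range m, uk (thk L k) W d d ≤ ∑ k ∈ Finset.range m, (d:ℝ) :=
      Finset.sum_le_sum fun k hk => uk_le_d (thk_pos (by
        have := Finset.mem_range.mp hk; omega)) W d hd hdW
    simpa using this
  have s2 : ∑ k ∈ Finset.Ico m L, uk (thk L k) W d d
      ≤ (L / (2 * Real.pi)) * Real.log (L / m) + L * (1 / 2) := by
    calc _ ≤ ∑ k ∈ Finset.Ico m L, ((L / (2 * Real.pi)) * (2 / (2 * (k:ℝ) + 1)) + 1 / 2) := by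
          refine Finset.sum_le_sum fun k hk => ?_
          have hk' := (Finset.mem_Ico.mp hk).2
          refine (uk_le_inv (thk_pos hk') W d (by exact_mod_cast hd) hdW).trans ?_
          refine (inv_sinh_le hk').trans (le_of_eq ?_)
          unfold tk; field_simp
      _ = (L / (2 * Real.pi)) * ∑ k ∈ Finset.Ico m L, 2 / (2 * (k:ℝ) + 1) + (L - m : ℝ) * (1 / 2) := by
          rw [Finset.sum_add_distrib, ← Finset.mul_sum]
          simp [Nat.cast_sub hmL]
      _ ≤ _ := by
          gcongr
          · exact sum_odd_le m L hm0 hmL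
          · have : (0:ℝ) ≤ m := by positivity
            linarith
  have hlog : Real.log (L / m) ≤ Real.log d := by
    have : (0:ℝ) < m := by exact_mod_cast hm0
    apply Real.log_le_log (by positivity)
    rw [div_le_iff₀ (by positivity)] at hm1 ⊢
    linarith
  calc _ ≤ 2 * Real.pi / L * (m * d + ((L / (2 * Real.pi)) * Real.log (L / m) + L * (1 / 2))) := by
        gcongr
    _ = 2 * Real.pi * (m * d / L) + Real.log (L / m) + Real.pi := by field_simp; ring
    _ ≤ 2 * Real.pi * 2 + Real.log d + Real.pi := by
        gcongr
        rw [div_le_iff₀ hL]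
        have : (m:ℝ) ≤ 2 * (L / d) := by linarith
        calc (m:ℝ) * d ≤ 2 * (L / d) * d := by gcongr
          _ = 2 * L := by field_simp
    _ ≤ _ := by linarith

theorem thk_ge {L k : ℕ} (hk : k < L) : tk L k / Real.pi ≤ thk L k := by
  have hs := sk_pos hk
  have ht := tk_pos hk
  have hs1 := Real.sin_le_one (tk L k / 2)
  have h1 := Real.mul_le_sin (x := tk L k / 2) (by linarith) (by linarith [tk_lt hk])
  set s := Real.sin (tk L k / 2) with hsdef
  have h2 : s / 2 ≤ Real.arsinh s := by
    rw [← Real.sinh_le_sinh, Real.sinh_arsinh, Real.sinh_eq]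
    have e1 := Real.add_one_le_exp (-(s / 2))
    have e2 : Real.exp (s / 2) ≤ 1 / (1 - s / 2) := by
      rw [le_div_iff₀ (by linarith)]
      have : Real.exp (s / 2) * Real.exp (-(s / 2)) = 1 := by rw [← Real.exp_add]; simp
      rw [← this]
      gcongr
      linarith
    have e3 : 1 / (1 - s / 2) ≤ 1 + s := by
      rw [div_le_iff₀ (by linarith)]; nlinarith
    linarith
  have e : 2 / Real.pi * (tk L k / 2) = tk L k / Real.pi := by ring
  unfold thk
  rw [← hsdef]
  linarith

theorem uk_ge {n k : ℕ} (hk : k < n) :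
    1 / (2 * tk n k) - 1 / 8 - Real.pi ^ 2 / (2 * n * tk n k ^ 2)
      ≤ uk (thk n k) (2 * n) n n := by
  have hpi := Real.pi_pos
  have hn : (0:ℝ) < n := by exact_mod_cast (Nat.zero_le k).trans_lt hk
  have hθ := thk_pos hk
  have ht := tk_pos hk
  have hge := thk_ge hk
  have hS : 0 < Real.sinh (thk n k) := Real.sinh_pos_iff.mpr hθ
  have hSθ : thk n k ≤ Real.sinh (thk n k) := Real.self_le_sinh_iff.mpr hθ.le
  have h1 : 1 / (2 * tk n k) - 1 / 8 ≤ 1 / (2 * Real.sinh (thk n k)) := by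
    have hs := sk_pos hk
    have hst : Real.sin (tk n k / 2) ≤ tk n k / 2 := Real.sin_le (by linarith)
    have hs1 := Real.sin_le_one (tk n k / 2)
    have hsq : Real.sqrt (1 + Real.sin (tk n k / 2) ^ 2) ≤ 1 + Real.sin (tk n k / 2) ^ 2 / 2 := by
      rw [Real.sqrt_le_iff]; constructor
      · positivity
      · nlinarith [sq_nonneg (Real.sin (tk n k / 2) ^ 2)]
    have hub : Real.sinh (thk n k) ≤ 2 * Real.sin (tk n k / 2) * (1 + Real.sin (tk n k / 2) ^ 2 / 2) := by
      rw [sinh_thk]; gcongr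
    set s := Real.sin (tk n k / 2)
    have hub2 : Real.sinh (thk n k) ≤ 2 * s * (1 + s / 2) := by
      refine hub.trans ?_
      gcongr
      nlinarith
    have a1 : 1 / (2 * (2 * s * (1 + s / 2))) ≤ 1 / (2 * Real.sinh (thk n k)) := by gcongr
    have a2 : 1 / (4 * s) - 1 / 8 ≤ 1 / (2 * (2 * s * (1 + s / 2))) := by
      rw [show 1 / (4 * s) - 1 / 8 = (2 - s) / (8 * s) by field_simp; ring,
        div_le_div_iff₀ (by positivity) (by positivity)]
      nlinarith [mul_pos hs (sq_pos_of_pos hs)]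
    have a3 : 1 / (2 * tk n k) ≤ 1 / (4 * s) := by
      apply one_div_le_one_div_of_le (by positivity); linarith
    linarith
  have hu : uk (thk n k) (2 * n) n n = 1 / (2 * Real.sinh (thk n k)) * Real.tanh (thk n k * n) := by
    unfold uk
    rw [min_self, max_self, Real.tanh_eq_sinh_div_cosh]
    push_cast
    rw [show thk n k * (2 * (n:ℝ) - n) = thk n k * n by ring,
      show thk n k * (2 * (n:ℝ)) = 2 * (thk n k * n) by ring, Real.sinh_two_mul]
    have : 0 < Real.sinh (thk n k * n) := Real.sinh_pos_iff.mpr (by positivity)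
    have := Real.cosh_pos (thk n k * n)
    field_simp
  have htanh : 1 - 1 / (thk n k * n) ≤ Real.tanh (thk n k * n) := by
    have hu0 : 0 < thk n k * n := by positivity
    generalize thk n k * n = u at hu0 ⊢
    rw [Real.tanh_eq_sinh_div_cosh, sub_le_iff_le_add, ← sub_le_iff_le_add', le_div_iff₀ hu0]
    have hc := Real.cosh_pos u
    have : 1 - Real.sinh u / Real.cosh u = Real.exp (-u) / Real.cosh u := by
      rw [← Real.cosh_sub_sinh]; field_simp
    rw [this, div_mul_eq_mul_div, div_le_one hc, Real.cosh_eq]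
    have e1 := Real.add_one_le_exp (2 * u)
    have e2 : Real.exp u = Real.exp (2 * u) * Real.exp (-u) := by rw [← Real.exp_add]; congr 1; ring
    have e3 := Real.exp_pos (-u)
    rw [e2]
    nlinarith
  have h2 : 1 / (2 * Real.sinh (thk n k)) * (1 / (thk n k * n)) ≤ Real.pi ^ 2 / (2 * n * tk n k ^ 2) := by
    calc _ ≤ 1 / (2 * (tk n k / Real.pi)) * (1 / ((tk n k / Real.pi) * n)) := by
          gcongr
          linarith
      _ = _ := by field_simp
  rw [hu]
  calc _ ≤ 1 / (2 * Real.sinh (thk n k)) - 1 / (2 * Real.sinh (thk n k)) * (1 / (thk n k * n)) := by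
        linarith
    _ = 1 / (2 * Real.sinh (thk n k)) * (1 - 1 / (thk n k * n)) := by ring
    _ ≤ _ := by gcongr

theorem le_Rk (n : ℕ) (hn : 0 < n) :
    Real.log n - 16 * Real.pi ≤ Rk (2 * n) n n n 0 := by
  have hpi := Real.pi_pos
  have hn' : (0:ℝ) < n := by exact_mod_cast hn
  unfold Rk
  simp only [Int.cast_zero, mul_zero, Real.cos_zero, one_mul]
  have h1 : ∑ k ∈ Finset.range n, ((n / (2 * Real.pi)) * (2 / (2 * (k:ℝ) + 1)) - 1 / 8
      - 2 * n * (1 / (2 * (k:ℝ) + 1) ^ 2)) ≤ ∑ k ∈ Finset.range n, uk (thk n k) (2 * n) n n := by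
    refine Finset.sum_le_sum fun k hk => ?_
    refine le_trans (le_of_eq ?_) (uk_ge (Finset.mem_range.mp hk))
    unfold tk; field_simp
  rw [Finset.sum_sub_distrib, Finset.sum_sub_distrib, ← Finset.mul_sum, ← Finset.mul_sum] at h1
  simp only [Finset.sum_const, Finset.card_range, nsmul_eq_mul] at h1
  have h2 := le_sum_odd n
  have h3 := sum_sq_le n
  have h4 : Real.log n ≤ Real.log (n + 1) := Real.log_le_log hn' (by linarith)
  calc _ ≤ Real.log n - Real.pi / 4 - 4 * Real.pi * 2 := by linarith
    _ ≤ ∑ k ∈ Finset.range n, 2 / (2 * (k:ℝ) + 1) - Real.pi / 4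
        - 4 * Real.pi * ∑ k ∈ Finset.range n, 1 / (2 * (k:ℝ) + 1) ^ 2 := by
      gcongr
      linarith
    _ = 2 * Real.pi / n * (n / (2 * Real.pi) * ∑ k ∈ Finset.range n, 2 / (2 * (k:ℝ) + 1)
        - n * (1 / 8) - 2 * n * ∑ k ∈ Finset.range n, 1 / (2 * (k:ℝ) + 1) ^ 2) := by
      generalize ∑ k ∈ Finset.range n, 2 / (2 * (k:ℝ) + 1) = A
      generalize ∑ k ∈ Finset.range n, 1 / (2 * (k:ℝ) + 1) ^ 2 = B
      field_simp; ring
    _ ≤ _ := by gcongr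

/-- Coordinate changes. -/
def Compat (e : Vtx → Vtx) : Prop := Function.Injective e ∧ ∀ (f : Vtx → ℝ) x, nbS (f ∘ e) x = nbS f (e x)

theorem ker_le {S : Finset Vtx} {v : Vtx} {g : Vtx → ℝ} (h : IsKer S v g) (e : Vtx → Vtx)
    (he : Compat e) (W : ℤ) (d L : ℕ) (hd : 0 < d) (hdW : (d:ℤ) < W) (hdL : d ≤ L)
    (hev : e v = ((d:ℤ), 0)) (hS : ∀ x ∈ S, e x ∈ rect W L) : g v ≤ Real.log d + 16 * Real.pi := by
  have hfin : (e ⁻¹' rect W L).Finite := by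
    refine Set.Finite.preimage he.1.injOn ?_
    refine (Finset.finite_toSet (Finset.Icc (0, -(L:ℤ)) (W, (L:ℤ)))).subset ?_
    rintro ⟨x, y⟩ ⟨h1, h2, h3⟩
    simp only [abs_lt] at h1 h2 h3
    simp only [Finset.coe_Icc, Set.mem_Icc, Prod.mk_le_mk]
    omega
  have hker : IsKer hfin.toFinset v (Rf W d L ∘ e) := by
    constructor
    · intro x hx
      simp only [Set.Finite.mem_toFinset, Set.mem_preimage] at hx
      simp [Rf, hx]
    · intro x hx
      simp only [Set.Finite.mem_toFinset, Set.mem_preimage] at hx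
      rw [he.2, Function.comp, Rf_eq W d L (by exact_mod_cast hd) hdW _ hx, ← hev]
      simp only [he.1.eq_iff]
  have := h.mono (by intro x hx; simpa using hS x hx) hker v
  refine this.trans ?_
  simp only [Function.comp, hev, Rf]
  rw [if_pos]
  · exact Rk_le W d L hd hdW hdL
  · refine ⟨by simpa using hd, hdW, ?_⟩
    simp only [abs_zero]
    exact_mod_cast hd.trans_le hdL

theorem le_ker {S : Finset Vtx} {v : Vtx} {g : Vtx → ℝ} (h : IsKer S v g) (n : ℕ) (hn : 0 < n)
    (hS : ∀ x : Vtx, |x.1 - v.1| < n → |x.2 - v.2| < n → x ∈ S) :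
    Real.log n - 16 * Real.pi ≤ g v := by
  let e : Vtx → Vtx := fun x => (x.1 - v.1 + n, x.2 - v.2)
  have he : Compat e := by
    constructor
    · rintro ⟨a, b⟩ ⟨c, d⟩ hh
      simp only [e, Prod.mk.injEq] at hh ⊢
      omega
    · intro f x
      simp only [nbS, Function.comp, e]
      congr 1 <;> [congr 1 <;> [congr 1; skip]; skip] <;> congr 2 <;> ring
  have hev : e v = ((n:ℤ), 0) := by simp [e]
  have hrect : ∀ x, e x ∈ rect (2 * n) n → x ∈ S := by
    intro x hx
    obtain ⟨h1, h2, h3⟩ := hx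
    simp only [e] at h1 h2 h3
    exact hS x (by rw [abs_lt]; omega) h3
  have hsub : (e ⁻¹' rect (2 * n) n) ⊆ S := fun x hx => hrect x hx
  have hfin : (e ⁻¹' rect (2 * n) n).Finite := S.finite_toSet.subset hsub
  have hn' : (0:ℤ) < n := by exact_mod_cast hn
  have hker : IsKer hfin.toFinset v (Rf (2 * n) n n ∘ e) := by
    constructor
    · intro x hx
      simp only [Set.Finite.mem_toFinset, Set.mem_preimage] at hx
      simp [Rf, hx]
    · intro x hx
      simp only [Set.Finite.mem_toFinset, Set.mem_preimage] at hx
      rw [he.2, Function.comp, Rf_eq (2 * n) n n hn' (by omega) _ hx, ← hev]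
      simp only [he.1.eq_iff]
  have := hker.mono (by intro x hx; exact hrect x (by simpa using hx)) h v
  refine le_trans ?_ this
  simp only [Function.comp, hev, Rf]
  rw [if_pos]
  · exact le_Rk n hn
  · refine ⟨hn', by simp only; omega, by simpa using hn⟩

section PBsec

/-- linear functional of the field on `V_N` -/
noncomputable def lin (N : ℕ) (c : Vtx → ℝ) (ω : FieldSp) : ℝ := ∑ v ∈ VN N, c v * ω v

/-- quadratic form -/
noncomputable def qf (N : ℕ) (G : Vtx → Vtx → ℝ) (c c' : Vtx → ℝ) : ℝ :=
  ∑ v ∈ VN N, ∑ w ∈ VN N, c v * c' w * G v w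

theorem intr_sub (B : Finset Vtx) : intr B ⊆ B := Finset.sdiff_subset

theorem green_supp {B : Finset Vtx} {G : Vtx → Vtx → ℝ} (hG : IsGreenFn B G) (y : Vtx) :
    (Function.support (fun x => G x y)).Finite := by
  refine (intr B).finite_toSet.subset ?_
  intro x hx
  by_contra h
  exact hx (hG.1 x y (Or.inl h))

theorem green_ker {B : Finset Vtx} {G : Vtx → Vtx → ℝ} (hG : IsGreenFn B G) (y : Vtx)
    (hy : y ∈ intr B) : IsKer (intr B) y (fun x => G x y) :=
  ⟨fun x hx => hG.1 x y (Or.inl hx), fun x hx => hG.2 y hy x hx⟩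

theorem ker_supp {S : Finset Vtx} {v : Vtx} {g : Vtx → ℝ} (h : IsKer S v g) :
    (Function.support g).Finite := by
  refine S.finite_toSet.subset ?_
  intro x hx
  by_contra h'
  exact hx (h.1 x h')

/-- Sum by parts for kernels: the reproducing property. -/
theorem ker_repr {B S : Finset Vtx} {G : Vtx → Vtx → ℝ} (hG : IsGreenFn B G) (hS : S ⊆ intr B)
    {v : Vtx} {g : Vtx → ℝ} (h : IsKer S v g) (w : Vtx) :
    ∑ x ∈ B, (2 / Real.pi) * (g x - nbS g x / 4) * G x w = g w := by
  have hpi := Real.pi_pos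
  by_cases hw : w ∈ intr B
  · have h1 := nbS_symm g (fun x => G x w) (ker_supp h) (green_supp hG w)
    have h2 : ∑' x, g x * nbS (fun x => G x w) x = ∑ x ∈ B, g x * nbS (fun x => G x w) x := by
      refine tsum_eq_sum fun x hx => ?_
      rw [h.1 x (fun hh => hx (intr_sub B (hS hh))), zero_mul]
    have h3 : ∑' x, nbS g x * G x w = ∑ x ∈ B, nbS g x * G x w := by
      refine tsum_eq_sum fun x hx => ?_
      rw [hG.1 x w (Or.inl fun hh => hx (intr_sub B hh)), mul_zero]
    rw [h2, h3] at h1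
    have h4 : ∀ x ∈ B, g x * nbS (fun x => G x w) x =
        4 * (g x * G x w) - 2 * Real.pi * (if x = w then g x else 0) := by
      intro x hx
      by_cases hxS : x ∈ S
      · have := hG.2 w hw x (hS hxS)
        have e : G x w = nbS (fun x => G x w) x / 4 + Real.pi / 2 * (if x = w then 1 else 0) := this
        split_ifs with hxw
        · rw [if_pos hxw] at e
          linear_combination 4 * g x * (-e)
        · rw [if_neg hxw] at e
          linear_combination 4 * g x * (-e)
      · rw [h.1 x hxS]; simp
    rw [Finset.sum_congr rfl h4, Finset.sum_sub_distrib, ← Finset.mul_sum, ← Finset.mul_sum,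
      Finset.sum_ite_eq' , if_pos (intr_sub B hw)] at h1
    have e : ∀ x ∈ B, (2 / Real.pi) * (g x - nbS g x / 4) * G x w =
        (2 / Real.pi) * (g x * G x w) - (1 / (2 * Real.pi)) * (nbS g x * G x w) := by
      intro x _; field_simp; ring
    rw [Finset.sum_congr rfl e, Finset.sum_sub_distrib, ← Finset.mul_sum, ← Finset.mul_sum, h1]
    field_simp; ring
  · rw [h.1 w (fun hh => hw (hS hh))]
    refine Finset.sum_eq_zero fun x _ => ?_
    rw [hG.1 x w (Or.inr hw), mul_zero]

theorem green_symm {B : Finset Vtx} {G : Vtx → Vtx → ℝ} (hG : IsGreenFn B G) (x y : Vtx) :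
    G x y = G y x := by
  by_cases hy : y ∈ intr B
  · have h := ker_repr hG (Finset.Subset.refl _) (green_ker hG y hy) x
    by_cases hx : x ∈ intr B
    · rw [← h]
      rw [Finset.sum_eq_single_of_mem y (intr_sub B hy)]
      · have := (green_ker hG y hy).2 y hy
        simp only [if_true, mul_one] at this
        have hpi := Real.pi_pos
        have e : G y y - nbS (fun x => G x y) y / 4 = Real.pi / 2 := by linarith
        rw [e]; field_simp
      · intro z hz hzy
        by_cases hzi : z ∈ intr B
        · have := (green_ker hG y hy).2 z hzi
          simp only [hzy, if_false, mul_zero, add_zero] at this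
          rw [← this]; simp
        · rw [hG.1 z x (Or.inl hzi), mul_zero]
    · rw [hG.1 x y (Or.inl hx), hG.1 y x (Or.inr hx)]
  · rw [hG.1 x y (Or.inr hy), hG.1 y x (Or.inl hy)]

theorem nbS_form_le (f : Vtx → ℝ) (hf : f.support.Finite) :
    ∑' x, f x * nbS f x ≤ ∑' x, 4 * f x ^ 2 := by
  have hsq : ∀ e : Vtx ≃ Vtx, Summable (fun x => f (e x) ^ 2) := by
    intro e
    refine e.summable_iff (f := fun x => f x ^ 2) |>.mpr ?_
    refine summable_of_hasFiniteSupport (hf.subset ?_)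
    intro x hx hx0; apply hx; simp [hx0]
  have hsqe : ∀ e : Vtx ≃ Vtx, ∑' x, f (e x) ^ 2 = ∑' x, f x ^ 2 := fun e =>
    e.tsum_eq (fun x => f x ^ 2)
  let e1 : Vtx ≃ Vtx := ⟨fun x => (x.1 + 1, x.2), fun x => (x.1 - 1, x.2),
    fun x => by simp, fun x => by simp⟩
  let e2 : Vtx ≃ Vtx := ⟨fun x => (x.1, x.2 + 1), fun x => (x.1, x.2 - 1),
    fun x => by simp, fun x => by simp⟩
  have s0 := hsq (Equiv.refl _)
  have hle : ∑' x, f x * nbS f x ≤ ∑' x, (2 * f ((Equiv.refl _) x) ^ 2 + (1/2) * f (e1 x) ^ 2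
      + (1/2) * f (e1.symm x) ^ 2 + (1/2) * f (e2 x) ^ 2 + (1/2) * f (e2.symm x) ^ 2) := by
    refine Summable.tsum_le_tsum (fun x => ?_) ?_ ?_
    · simp only [nbS, e1, e2, Equiv.coe_fn_mk, Equiv.coe_fn_symm_mk, Equiv.refl_apply]
      nlinarith [sq_nonneg (f x - f (x.1 + 1, x.2)), sq_nonneg (f x - f (x.1 - 1, x.2)),
        sq_nonneg (f x - f (x.1, x.2 + 1)), sq_nonneg (f x - f (x.1, x.2 - 1))]
    · refine summable_of_hasFiniteSupport (hf.subset ?_)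
      intro x hx hx0; apply hx; simp [hx0]
    · exact (((((s0.mul_left 2).add ((hsq e1).mul_left _)).add ((hsq e1.symm).mul_left _)).add
        ((hsq e2).mul_left _)).add ((hsq e2.symm).mul_left _))
  refine hle.trans (le_of_eq ?_)
  rw [(((((s0.mul_left 2).add ((hsq e1).mul_left _)).add ((hsq e1.symm).mul_left _)).add
        ((hsq e2).mul_left _))).tsum_add ((hsq e2.symm).mul_left _),
    ((((s0.mul_left 2).add ((hsq e1).mul_left _)).add ((hsq e1.symm).mul_left _))).tsum_add
        ((hsq e2).mul_left _),
    ((((s0.mul_left 2).add ((hsq e1).mul_left _)))).tsum_add ((hsq e1.symm).mul_left _),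
    (s0.mul_left 2).tsum_add ((hsq e1).mul_left _)]
  simp only [tsum_mul_left, hsqe]
  ring

theorem qf_nonneg {N : ℕ} {G : Vtx → Vtx → ℝ} (hG : IsGreenFn (VN N) G) (c : Vtx → ℝ) :
    0 ≤ qf N G c c := by
  have hpi := Real.pi_pos
  let f : Vtx → ℝ := fun x => ∑ w ∈ VN N, c w * G x w
  have hf0 : ∀ x, x ∉ intr (VN N) → f x = 0 := fun x hx =>
    Finset.sum_eq_zero fun w _ => by rw [hG.1 x w (Or.inl hx), mul_zero]
  have hfs : f.support.Finite := by
    refine (intr (VN N)).finite_toSet.subset ?_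
    intro x hx
    by_contra h
    exact hx (hf0 x h)
  have hfe : ∀ x ∈ intr (VN N), f x = nbS f x / 4 + Real.pi / 2 * c x := by
    intro x hx
    have h1 : ∀ w ∈ VN N, c w * G x w = (c w * nbS (fun x => G x w) x) / 4 +
        Real.pi / 2 * (if x = w then c w else 0) := by
      intro w _
      by_cases hw : w ∈ intr (VN N)
      · have e : G x w = nbS (fun x => G x w) x / 4 + Real.pi / 2 * (if x = w then 1 else 0) :=
          hG.2 w hw x hx
        split_ifs with h
        · rw [if_pos h] at e; linear_combination c w * e
        · rw [if_neg h] at e; linear_combination c w * e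
      · have : x ≠ w := fun e => hw (e ▸ hx)
        simp [nbS, hG.1 _ w (Or.inr hw), this]
    have h2 : nbS f x = ∑ w ∈ VN N, c w * nbS (fun x => G x w) x := by
      simp only [nbS, f, mul_add, Finset.sum_add_distrib]
    rw [h2]
    simp only [f]
    rw [Finset.sum_congr rfl h1, Finset.sum_add_distrib, ← Finset.sum_div, ← Finset.mul_sum,
      Finset.sum_ite_eq, if_pos (intr_sub _ hx)]
  have hq : qf N G c c = ∑ x ∈ VN N, c x * f x := by
    unfold qf
    refine Finset.sum_congr rfl fun x _ => ?_
    simp only [f, Finset.mul_sum]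
    refine Finset.sum_congr rfl fun w _ => by ring
  have hq2 : ∀ x ∈ VN N, c x * f x = (1 / (2 * Real.pi)) * (4 * f x ^ 2 - f x * nbS f x) := by
    intro x _
    by_cases hx : x ∈ intr (VN N)
    · have := hfe x hx
      have : c x = (2 / Real.pi) * (f x - nbS f x / 4) := by
        rw [this]; field_simp; ring
      rw [this]; field_simp; ring
    · rw [hf0 x hx]; ring
  have t1 : ∑' x, f x * nbS f x = ∑ x ∈ VN N, f x * nbS f x :=
    tsum_eq_sum fun x hx => by rw [hf0 x (fun hh => hx (intr_sub _ hh)), zero_mul]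
  have t2 : ∑' x, 4 * f x ^ 2 = ∑ x ∈ VN N, 4 * f x ^ 2 :=
    tsum_eq_sum fun x hx => by rw [hf0 x (fun hh => hx (intr_sub _ hh))]; ring
  have := nbS_form_le f hfs
  rw [t1, t2] at this
  rw [hq, Finset.sum_congr rfl hq2, ← Finset.mul_sum, Finset.sum_sub_distrib]
  apply mul_nonneg (by positivity)
  linarith

open MeasureTheory ProbabilityTheory

theorem lin_meas (N : ℕ) (c : Vtx → ℝ) : Measurable (lin N c) := by
  unfold lin; fun_prop

theorem lin_map {N : ℕ} {P : Measure FieldSp} {G : Vtx → Vtx → ℝ}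
    (hP : ∀ c : Vtx → ℝ, P.map (fun ω => ∑ v ∈ VN N, c v * ω v) =
        gaussianReal 0 (Real.toNNReal (∑ v ∈ VN N, ∑ w ∈ VN N, c v * c w * G v w))) (c : Vtx → ℝ) :
    P.map (lin N c) = gaussianReal 0 (Real.toNNReal (qf N G c c)) := hP c

theorem lin_memLp {N : ℕ} {P : Measure FieldSp} {G : Vtx → Vtx → ℝ}
    (hP : ∀ c : Vtx → ℝ, P.map (lin N c) = gaussianReal 0 (Real.toNNReal (qf N G c c)))
    (c : Vtx → ℝ) : MemLp (lin N c) 2 P := by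
  have h : MemLp id 2 (P.map (lin N c)) := by
    rw [hP]; exact memLp_id_gaussianReal 2
  exact (memLp_map_measure_iff (by fun_prop) (lin_meas N c).aemeasurable).mp h

theorem lin_mean {N : ℕ} {P : Measure FieldSp} {G : Vtx → Vtx → ℝ}
    (hP : ∀ c : Vtx → ℝ, P.map (lin N c) = gaussianReal 0 (Real.toNNReal (qf N G c c)))
    (c : Vtx → ℝ) : ∫ ω, lin N c ω ∂P = 0 := by
  have : ∫ x, x ∂(P.map (lin N c)) = 0 := by rw [hP, integral_id_gaussianReal]
  rwa [integral_map (lin_meas N c).aemeasurable (by fun_prop)] at this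

theorem lin_sq {N : ℕ} {P : Measure FieldSp} {G : Vtx → Vtx → ℝ} (hG : IsGreenFn (VN N) G)
    (hP : ∀ c : Vtx → ℝ, P.map (lin N c) = gaussianReal 0 (Real.toNNReal (qf N G c c)))
    (c : Vtx → ℝ) : ∫ ω, lin N c ω ^ 2 ∂P = qf N G c c := by
  have h1 : Var[id; P.map (lin N c)] = qf N G c c := by
    rw [hP, variance_id_gaussianReal, Real.coe_toNNReal _ (qf_nonneg hG c)]
  have h2 : ∫ x, x ^ 2 ∂(P.map (lin N c)) = qf N G c c := by
    rw [variance_of_integral_eq_zero (by fun_prop) (by rw [hP]; exact integral_id_gaussianReal)] at h1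
    simpa using h1
  rwa [integral_map (lin_meas N c).aemeasurable (by fun_prop)] at h2

theorem lin_add (N : ℕ) (c c' : Vtx → ℝ) (ω : FieldSp) :
    lin N (fun x => c x + c' x) ω = lin N c ω + lin N c' ω := by
  simp only [lin, add_mul, Finset.sum_add_distrib]

theorem lin_sub (N : ℕ) (c c' : Vtx → ℝ) (ω : FieldSp) :
    lin N (fun x => c x - c' x) ω = lin N c ω - lin N c' ω := by
  simp only [lin, sub_mul, Finset.sum_sub_distrib]

theorem qf_symm {N : ℕ} {G : Vtx → Vtx → ℝ} (hG : IsGreenFn (VN N) G) (c c' : Vtx → ℝ) :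
    qf N G c c' = qf N G c' c := by
  unfold qf
  rw [Finset.sum_comm]
  refine Finset.sum_congr rfl fun x _ => Finset.sum_congr rfl fun y _ => ?_
  rw [green_symm hG y x]; ring

theorem qf_add_left {N : ℕ} {G : Vtx → Vtx → ℝ} (c c' d : Vtx → ℝ) :
    qf N G (fun x => c x + c' x) d = qf N G c d + qf N G c' d := by
  simp only [qf, add_mul, Finset.sum_add_distrib]

theorem qf_sub_left {N : ℕ} {G : Vtx → Vtx → ℝ} (c c' d : Vtx → ℝ) :
    qf N G (fun x => c x - c' x) d = qf N G c d - qf N G c' d := by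
  simp only [qf, sub_mul, Finset.sum_sub_distrib]

theorem lin_mul {N : ℕ} {P : Measure FieldSp} {G : Vtx → Vtx → ℝ} (hG : IsGreenFn (VN N) G)
    (hP : ∀ c : Vtx → ℝ, P.map (lin N c) = gaussianReal 0 (Real.toNNReal (qf N G c c)))
    (c c' : Vtx → ℝ) : ∫ ω, lin N c ω * lin N c' ω ∂P = qf N G c c' := by
  have h := lin_sq hG hP (fun x => c x + c' x)
  have e : ∀ ω, lin N (fun x => c x + c' x) ω ^ 2 = lin N c ω ^ 2 + lin N c' ω ^ 2
      + 2 * (lin N c ω * lin N c' ω) := by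
    intro ω; rw [lin_add]; ring
  simp_rw [e] at h
  have i1 := (lin_memLp hP c).integrable_sq
  have i2 := (lin_memLp hP c').integrable_sq
  have i3 : Integrable (fun ω => lin N c ω * lin N c' ω) P :=
    (lin_memLp hP c).integrable_mul (lin_memLp hP c')
  have i12 : Integrable (fun ω => lin N c ω ^ 2 + lin N c' ω ^ 2) P := i1.add i2
  rw [integral_add i12 (i3.const_mul 2), integral_add i1 i2, integral_const_mul,
    lin_sq hG hP, lin_sq hG hP, qf_add_left, qf_symm hG c (fun x => c x + c' x), qf_symm hG c' (fun x => c x + c' x),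
    qf_add_left, qf_add_left, qf_symm hG c' c] at h
  linarith

theorem restr_gauss_gen (B : Finset Vtx) {P : Measure FieldSp}
    (hP : ∀ c : Vtx → ℝ, ∃ t, P.map (fun ω : FieldSp => ∑ x ∈ B, c x * ω x) = gaussianReal 0 t) :
    HasGaussianLaw (fun (ω : FieldSp) (i : B) => ω i) P := by
  constructor
  refine isGaussian_of_map_eq_gaussianReal fun L => ?_
  let c : Vtx → ℝ := fun x => if h : x ∈ B then L (Pi.single ⟨x, h⟩ 1) else 0
  obtain ⟨t, ht⟩ := hP c
  refine ⟨0, t, Eq.trans ?_ ht⟩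
  rw [Measure.map_map L.continuous.measurable
    (measurable_pi_lambda _ fun i => measurable_pi_apply _)]
  congr 1
  funext ω
  simp only [Function.comp]
  have h1 : (fun i : B => ω i) = ∑ i : B, ω i • (Pi.single i (1:ℝ) : B → ℝ) := by
    funext j
    simp [Finset.sum_apply, Pi.single_apply]
  rw [h1, map_sum, ← Finset.sum_coe_sort B (fun x => c x * ω x)]
  refine Finset.sum_congr rfl fun i _ => ?_
  rw [map_smul]
  simp [c, mul_comm]

theorem restr_gauss {N : ℕ} {P : Measure FieldSp} {G : Vtx → Vtx → ℝ}
    (hP : ∀ c : Vtx → ℝ, P.map (lin N c) = gaussianReal 0 (Real.toNNReal (qf N G c c))) :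
    HasGaussianLaw (fun (ω : FieldSp) (i : VN N) => ω i) P :=
  restr_gauss_gen (VN N) fun c => ⟨_, hP c⟩

theorem pair_gauss (B : Finset Vtx) {P : Measure FieldSp} (A : Set Vtx) [Fintype A] (hA : A ⊆ B)
    (b : Vtx → ℝ) (h : HasGaussianLaw (fun (ω : FieldSp) (i : B) => ω i) P) :
    HasGaussianLaw (fun ω : FieldSp => ((fun i : A => ω i), fun _ : Unit => ∑ x ∈ B, b x * ω x)) P := by
  let L : (B → ℝ) →L[ℝ] ((A → ℝ) × (Unit → ℝ)) :=
    ContinuousLinearMap.prod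
      (ContinuousLinearMap.pi fun i : A => ContinuousLinearMap.proj ⟨i.1, hA i.2⟩)
      (ContinuousLinearMap.pi fun _ => ∑ i : B, b i • ContinuousLinearMap.proj i)
  have := h.map_fun L
  have e : (fun ω : FieldSp => ((fun i : A => ω i), fun _ : Unit => ∑ x ∈ B, b x * ω x))
      = fun ω => L (fun i : B => ω i) := by
    funext ω
    refine Prod.ext rfl ?_
    funext _
    simp [L, ← Finset.sum_coe_sort B (fun x => b x * ω x)]
  rw [e]; exact this

theorem condExp_lin {N : ℕ} {P : Measure FieldSp} [IsProbabilityMeasure P] {G : Vtx → Vtx → ℝ}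
    (hG : IsGreenFn (VN N) G)
    (hP : ∀ c : Vtx → ℝ, P.map (lin N c) = gaussianReal 0 (Real.toNNReal (qf N G c c)))
    (A : Set Vtx) (hA : A ⊆ VN N) (b h : Vtx → ℝ) (v : Vtx) (hv : v ∈ VN N)
    (hbh : ∀ x, b x + h x = if x = v then 1 else 0) (hh : ∀ x ∈ VN N, x ∉ A → h x = 0)
    (hb : ∀ w ∈ A, qf N G b (fun x => if x = w then 1 else 0) = 0) :
    P[fun ω : FieldSp => ω v | ⨆ w ∈ A, MeasurableSpace.comap (fun ω : FieldSp => ω w) inferInstance]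
      =ᵐ[P] lin N h := by
  set F : MeasurableSpace FieldSp :=
    ⨆ w ∈ A, MeasurableSpace.comap (fun ω : FieldSp => ω w) inferInstance with hF
  have hFle : F ≤ MeasurableSpace.pi := by
    refine iSup₂_le fun w _ => ?_
    exact (measurable_pi_apply w).comap_le
  have hdelta : ∀ w ∈ VN N, ∀ ω, lin N (fun x => if x = w then 1 else 0) ω = ω w := by
    intro w hw ω
    simp [lin, hw]
  have hsplit : (fun ω : FieldSp => ω v) = lin N b + lin N h := by
    funext ω
    rw [Pi.add_apply, ← lin_add, ← hdelta v hv ω]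
    congr 1; funext x; exact (hbh x).symm
  -- measurability of the second part
  have hmeas : StronglyMeasurable[F] (lin N h) := by
    refine Measurable.stronglyMeasurable ?_
    unfold lin
    refine Finset.measurable_sum _ fun x hx => ?_
    by_cases hxA : x ∈ A
    · refine Measurable.const_mul ?_ _
      refine Measurable.mono (comap_measurable (fun ω : FieldSp => ω x)) ?_ le_rfl
      exact le_iSup₂_of_le x hxA le_rfl
    · rw [hh x hx hxA]; simp only [zero_mul]; exact measurable_const
  -- independence
  have hfinA : Finite A := (Finset.finite_toSet (VN N)).subset hA
  let := Fintype.ofFinite A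
  have hindep : IndepFun (fun (ω : FieldSp) (i : A) => ω i) (fun ω (_ : Unit) => lin N b ω) P := by
    refine HasGaussianLaw.indepFun_of_covariance_eval (X := fun (i : A) ω => ω i)
      (Y := fun (_ : Unit) ω => lin N b ω) ?_ ?_
    · exact pair_gauss (VN N) A hA b (restr_gauss hP)
    · intro i _
      have hi := hA i.2
      have e1 : (fun ω : FieldSp => ω i) = lin N (fun x => if x = (i:Vtx) then 1 else 0) := by
        funext ω; exact (hdelta i hi ω).symm
      rw [e1, covariance_eq_sub (lin_memLp hP _) (lin_memLp hP _), lin_mean hP, zero_mul, sub_zero]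
      have := lin_mul hG hP (fun x => if x = (i:Vtx) then 1 else 0) b
      rw [qf_symm hG, hb i i.2] at this
      exact this
  have hindep2 : Indep (MeasurableSpace.comap (lin N b) inferInstance) F P := by
    have h1 := (IndepFun_iff_Indep _ _ _).mp hindep
    refine indep_of_indep_of_le_left (indep_of_indep_of_le_right h1.symm ?_) ?_
    · refine iSup₂_le fun w hw => ?_
      have : (fun ω : FieldSp => ω w) = (fun f : A → ℝ => f ⟨w, hw⟩) ∘ (fun (ω : FieldSp) (i : A) => ω i) := rfl
      rw [this, ← MeasurableSpace.comap_comp]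
      exact MeasurableSpace.comap_mono (measurable_pi_apply _).comap_le
    · have : lin N b = (fun f : Unit → ℝ => f ()) ∘ (fun ω (_ : Unit) => lin N b ω) := rfl
      rw [this, ← MeasurableSpace.comap_comp]
      exact MeasurableSpace.comap_mono (measurable_pi_apply _).comap_le
  have hc1 : P[lin N b | F] =ᵐ[P] fun _ => P[lin N b] :=
    condExp_indep_eq (lin_meas N b).comap_le hFle
      (comap_measurable (lin N b)).stronglyMeasurable hindep2
  have ib : Integrable (lin N b) P := (lin_memLp hP b).integrable (by norm_num)
  have ih : Integrable (lin N h) P := (lin_memLp hP h).integrable (by norm_num)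
  have hc2 : P[lin N h | F] = lin N h := condExp_of_stronglyMeasurable hFle hmeas ih
  rw [hsplit]
  refine (condExp_add ib ih F).trans ?_
  filter_upwards [hc1] with ω h1
  rw [Pi.add_apply, h1, hc2, lin_mean hP, zero_add]

end PBsec

theorem mem_intr (B : Finset Vtx) (v : Vtx) : v ∈ intr B ↔ v ∈ B ∧
    ((v.1 + 1, v.2) ∈ B ∧ (v.1 - 1, v.2) ∈ B ∧ (v.1, v.2 + 1) ∈ B ∧ (v.1, v.2 - 1) ∈ B) := by
  simp only [intr, bdry, Finset.mem_sdiff, Finset.mem_filter]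
  tauto

theorem intr_mono {B C : Finset Vtx} (h : B ⊆ C) : intr B ⊆ intr C := by
  intro v hv
  rw [mem_intr] at hv ⊢
  exact ⟨h hv.1, h hv.2.1, h hv.2.2.1, h hv.2.2.2.1, h hv.2.2.2.2⟩

theorem mem_VN (N : ℕ) (v : Vtx) : v ∈ VN N ↔ 0 ≤ v.1 ∧ v.1 ≤ N ∧ 0 ≤ v.2 ∧ v.2 ≤ N := by
  simp only [VN, Finset.mem_Icc, Prod.le_def]
  tauto

theorem mem_intr_VN (N : ℕ) (v : Vtx) :
    v ∈ intr (VN N) ↔ 0 < v.1 ∧ v.1 < N ∧ 0 < v.2 ∧ v.2 < N := by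
  simp only [mem_intr, mem_VN]
  omega

theorem nbhd_anti {N : ℕ} (hN : 1 ≤ N) {v : Vtx} (hv : v ∈ VN N) {a b : ℝ} (ha : 0 ≤ a)
    (hab : a ≤ b) (hb : b ≤ 1) : nbhd N b v ⊆ nbhd N a v := by
  have hN' : (1:ℝ) ≤ N := by exact_mod_cast hN
  rcases eq_or_lt_of_le hab with rfl | hlt
  · exact Finset.Subset.refl _
  have hb0 : b ≠ 0 := by linarith
  have ha1 : a ≠ 1 := by linarith
  unfold nbhd
  rw [if_neg hb0, if_neg ha1]
  intro w hw
  have hrpos : ∀ t : ℝ, 0 ≤ (N:ℝ) ^ t / 2 := fun t => by positivity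
  split_ifs with h0
  · split_ifs at hw with h1
    · rw [Finset.mem_singleton] at hw; rw [hw]; exact hv
    · exact (Finset.mem_filter.mp hw).1
  · split_ifs at hw with h1
    · rw [Finset.mem_singleton] at hw; rw [hw]
      simp [hv, hrpos]
    · rw [Finset.mem_filter] at hw ⊢
      have : (N:ℝ) ^ (1 - b) ≤ (N:ℝ) ^ (1 - a) :=
        Real.rpow_le_rpow_of_exponent_le hN' (by linarith)
      refine ⟨hw.1, by linarith [hw.2.1], by linarith [hw.2.2]⟩

theorem nbhd_zero (N : ℕ) (v : Vtx) : nbhd N 0 v = VN N := by simp [nbhd]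

theorem upper1 {N : ℕ} {S : Finset Vtx} {v : Vtx} {g : Vtx → ℝ} (h : IsKer S v g)
    (hS : S ⊆ intr (VN N)) (hv : v ∈ intr (VN N)) (d : ℕ)
    (hd : (d:ℤ) = v.1 ∨ (d:ℤ) = N - v.1 ∨ (d:ℤ) = v.2 ∨ (d:ℤ) = N - v.2) :
    g v ≤ Real.log d + 16 * Real.pi := by
  have hv' := (mem_intr_VN N v).mp hv
  have hS' : ∀ x ∈ S, 0 < x.1 ∧ x.1 < N ∧ 0 < x.2 ∧ x.2 < N := fun x hx => (mem_intr_VN N x).mp (hS hx)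
  obtain ⟨v1, v2⟩ := v
  simp only at hd hv'
  rcases hd with hd | hd | hd | hd
  · refine ker_le h (fun x => (x.1, x.2 - v2)) ⟨?_, ?_⟩ N d N (by omega) (by omega) (by omega) ?_ ?_
    · rintro ⟨a, b⟩ ⟨c, d⟩ hh
      simp only [Prod.mk.injEq] at hh ⊢
      omega
    · intro f x
      simp only [nbS, Function.comp]
      ring_nf
    · simp [hd]
    · intro x hx
      have := hS' x hx
      simp only [rect, Set.mem_setOf_eq, abs_lt]
      omega
  · refine ker_le h (fun x => (N - x.1, x.2 - v2)) ⟨?_, ?_⟩ N d N (by omega) (by omega) (by omega) ?_ ?_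
    · rintro ⟨a, b⟩ ⟨c, d⟩ hh
      simp only [Prod.mk.injEq] at hh ⊢
      omega
    · intro f x
      simp only [nbS, Function.comp]
      ring_nf
    · simp [hd]
    · intro x hx
      have := hS' x hx
      simp only [rect, Set.mem_setOf_eq, abs_lt]
      omega
  · refine ker_le h (fun x => (x.2, x.1 - v1)) ⟨?_, ?_⟩ N d N (by omega) (by omega) (by omega) ?_ ?_
    · rintro ⟨a, b⟩ ⟨c, d⟩ hh
      simp only [Prod.mk.injEq] at hh ⊢
      omega
    · intro f x
      simp only [nbS, Function.comp]
      ring_nf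
    · simp [hd]
    · intro x hx
      have := hS' x hx
      simp only [rect, Set.mem_setOf_eq, abs_lt]
      omega
  · refine ker_le h (fun x => (N - x.2, x.1 - v1)) ⟨?_, ?_⟩ N d N (by omega) (by omega) (by omega) ?_ ?_
    · rintro ⟨a, b⟩ ⟨c, d⟩ hh
      simp only [Prod.mk.injEq] at hh ⊢
      omega
    · intro f x
      simp only [nbS, Function.comp]
      ring_nf
    · simp [hd]
    · intro x hx
      have := hS' x hx
      simp only [rect, Set.mem_setOf_eq, abs_lt]
      omega

theorem upper2 {S : Finset Vtx} {v : Vtx} {g : Vtx → ℝ} (h : IsKer S v g) (n : ℕ) (hn : 0 < n)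
    (hS : ∀ x ∈ S, |x.1 - v.1| < n ∧ |x.2 - v.2| < n) :
    g v ≤ Real.log n + 16 * Real.pi := by
  refine ker_le h (fun x => (x.1 - v.1 + n, x.2 - v.2)) ⟨?_, ?_⟩ (2 * n) n n hn (by omega) le_rfl ?_ ?_
  · rintro ⟨a, b⟩ ⟨c, d⟩ hh
    simp only [Prod.mk.injEq] at hh ⊢
    omega
  · intro f x
    simp only [nbS, Function.comp]
    ring_nf
  · simp
  · intro x hx
    have := hS x hx
    simp only [abs_lt] at this
    simp only [rect, Set.mem_setOf_eq, abs_lt]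
    omega

theorem upper2' {N : ℕ} (hN : 1 ≤ N) {v : Vtx} (hv : v ∈ VN N) {a : ℝ} (ha : 0 ≤ a) (ha1 : a ≤ 1)
    {g : Vtx → ℝ} (h : IsKer (intr (nbhd N a v)) v g) :
    g v ≤ (1 - a) * Real.log N + Real.log 2 + 16 * Real.pi := by
  have hN' : (1:ℝ) ≤ N := by exact_mod_cast hN
  set R : ℝ := (N:ℝ) ^ (1 - a) with hR
  have hR1 : 1 ≤ R := Real.one_le_rpow hN' (by linarith)
  have hsub : ∀ x ∈ nbhd N a v, |(x.1:ℝ) - v.1| ≤ R ∧ |(x.2:ℝ) - v.2| ≤ R := by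
    intro x hx
    unfold nbhd at hx
    split_ifs at hx with h0 h1
    · rw [mem_VN] at hx hv
      have : R = N := by rw [hR, h0]; simp
      rw [this]
      have e1 : |x.1 - v.1| ≤ (N:ℤ) := by rw [abs_le]; omega
      have e2 : |x.2 - v.2| ≤ (N:ℤ) := by rw [abs_le]; omega
      exact ⟨by exact_mod_cast e1, by exact_mod_cast e2⟩
    · rw [Finset.mem_singleton] at hx
      rw [hx]; simp; linarith
    · have := (Finset.mem_filter.mp hx).2
      constructor <;> linarith [this.1, this.2]
  have h1 := upper2 h (⌊R⌋₊ + 1) (by omega) (by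
    intro x hx
    have := hsub x (Finset.sdiff_subset hx)
    have key : ∀ z : ℤ, |(z:ℝ)| ≤ R → |z| < ((⌊R⌋₊ + 1 : ℕ) : ℤ) := by
      intro z hz
      have h2 : ((z.natAbs : ℕ) : ℝ) ≤ R := by rwa [Nat.cast_natAbs, Int.cast_abs]
      have h3 := Nat.le_floor h2
      rw [Int.abs_eq_natAbs]
      omega
    exact ⟨key _ (by push_cast; exact this.1), key _ (by push_cast; exact this.2)⟩)
  refine h1.trans ?_
  have h2 : ((⌊R⌋₊ + 1 : ℕ) : ℝ) ≤ R * 2 := by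
    push_cast
    linarith [Nat.floor_le (show 0 ≤ R by linarith)]
  have h3 := Real.log_le_log (by positivity) h2
  rw [Real.log_mul (by linarith) (by norm_num), hR, Real.log_rpow (by linarith)] at h3
  linarith

theorem key_bound {N : ℕ} (hN : 1 ≤ N) {v : Vtx} (hv : v ∈ VN N) {a b : ℝ} (ha : 0 ≤ a)
    (hab : a ≤ b) (hb1 : b ≤ 1) {ga gb : Vtx → ℝ} (hga : IsKer (intr (nbhd N a v)) v ga)
    (hgb : IsKer (intr (nbhd N b v)) v gb) :
    ga v - gb v ≤ (b - a) * Real.log N + (32 * Real.pi + 3) := by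
  have hN' : (1:ℝ) ≤ N := by exact_mod_cast hN
  have hpi := Real.pi_pos
  have hlog : 0 ≤ Real.log N := Real.log_nonneg hN'
  have hl2 := Real.log_two_lt_d9
  have hm := mul_nonneg (sub_nonneg.mpr hab) hlog
  rcases eq_or_lt_of_le hab with rfl | hlt
  · have := IsKer.mono (Finset.Subset.refl _) hga hgb v
    linarith
  have hgb0 := hgb.nonneg v
  have hsub0 : nbhd N a v ⊆ VN N := by
    have := nbhd_anti hN hv le_rfl ha (by linarith)
    rwa [nbhd_zero] at this
  by_cases hvS : v ∈ intr (nbhd N a v)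
  swap
  · rw [hga.eq_zero hvS v]; linarith
  have hvI := intr_mono hsub0 hvS
  have hv4 := (mem_intr_VN N v).mp hvI
  have hU2 := upper2' hN hv ha (by linarith) hga
  set r : ℝ := (N:ℝ) ^ (1 - b) / 2 with hr
  have hr0 : 0 < r := by positivity
  have hlr : Real.log r = (1 - b) * Real.log N - Real.log 2 := by
    rw [hr, Real.log_div (by positivity) (by norm_num), Real.log_rpow (by linarith)]
  have hsum : (1 - a) * Real.log N = (b - a) * Real.log N + (1 - b) * Real.log N := by ring
  by_cases hk : ⌊r⌋₊ = 0
  · have : r < 1 := Nat.floor_eq_zero.mp hk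
    have := Real.log_nonpos hr0.le this.le
    linarith
  have hk1 : 1 ≤ ⌊r⌋₊ := Nat.one_le_iff_ne_zero.mpr hk
  have hr1 : 1 ≤ r := (Nat.one_le_floor_iff r).mp hk1
  have hbne : b ≠ 1 := by
    intro hb
    rw [hb] at hr
    simp at hr
    rw [hr] at hr1; norm_num at hr1
  obtain ⟨d, hd, hd1, hd2, hd3, hd4⟩ : ∃ d : ℕ,
      ((d:ℤ) = v.1 ∨ (d:ℤ) = N - v.1 ∨ (d:ℤ) = v.2 ∨ (d:ℤ) = N - v.2) ∧ (d:ℤ) ≤ v.1 ∧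
      (d:ℤ) ≤ N - v.1 ∧ (d:ℤ) ≤ v.2 ∧ (d:ℤ) ≤ N - v.2 := by
    refine ⟨(min (min v.1 (N - v.1)) (min v.2 (N - v.2))).toNat, ?_⟩
    omega
  have hU1 := upper1 hga (intr_mono hsub0) hvI d hd
  have hlow : ∀ n : ℕ, 0 < n → n ≤ d → (n:ℝ) ≤ r → Real.log n - 16 * Real.pi ≤ gb v := by
    intro n hn hnd hnr
    refine le_ker hgb n hn fun x hx1 hx2 => ?_
    have hmem : ∀ y : Vtx, |y.1 - v.1| ≤ n → |y.2 - v.2| ≤ n → y ∈ nbhd N b v := by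
      intro y h1 h2
      unfold nbhd
      rw [if_neg (by linarith), if_neg hbne, Finset.mem_filter, mem_VN]
      have h1' : |(y.1:ℝ) - v.1| ≤ n := by exact_mod_cast h1
      have h2' : |(y.2:ℝ) - v.2| ≤ n := by exact_mod_cast h2
      rw [abs_le] at h1 h2
      exact ⟨by omega, by linarith, by linarith⟩
    rw [abs_lt] at hx1 hx2
    rw [mem_intr]
    refine ⟨hmem _ ?_ ?_, hmem _ ?_ ?_, hmem _ ?_ ?_, hmem _ ?_ ?_, hmem _ ?_ ?_⟩ <;>
      (simp only [abs_le]; omega)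
  by_cases hdk : d ≤ ⌊r⌋₊
  · have := hlow d (by omega) le_rfl ((Nat.cast_le.mpr hdk).trans (Nat.floor_le hr0.le))
    linarith
  · have := hlow ⌊r⌋₊ hk1 (by omega) (Nat.floor_le hr0.le)
    have h2 : r / 2 ≤ ⌊r⌋₊ := by
      have h3 := Nat.lt_floor_add_one r
      have h4 : (1:ℝ) ≤ ⌊r⌋₊ := by exact_mod_cast hk1
      linarith
    have h5 := Real.log_le_log (by positivity) h2
    rw [Real.log_div (by positivity) (by norm_num), hlr] at h5
    linarith

section PE2
open MeasureTheory ProbabilityTheory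

/-- the chosen kernel at scale `lam` -/
noncomputable def kerG (N : ℕ) (v : Vtx) (lam : ℝ) : Vtx → ℝ :=
  Classical.choose (IsKer.exists (intr (nbhd N lam v)) v)

theorem kerG_spec (N : ℕ) (v : Vtx) (lam : ℝ) : IsKer (intr (nbhd N lam v)) v (kerG N v lam) :=
  Classical.choose_spec (IsKer.exists (intr (nbhd N lam v)) v)

noncomputable def kerB (N : ℕ) (v : Vtx) (lam : ℝ) (x : Vtx) : ℝ :=
  (2 / Real.pi) * (kerG N v lam x - nbS (kerG N v lam) x / 4)

noncomputable def kerH (N : ℕ) (v : Vtx) (lam : ℝ) (x : Vtx) : ℝ :=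
  (if x = v then 1 else 0) - kerB N v lam x

theorem kerH_zero (N : ℕ) (v : Vtx) (lam : ℝ) (x : Vtx) (hx : x ∈ intr (nbhd N lam v)) :
    kerH N v lam x = 0 := by
  have h := (kerG_spec N v lam).2 x hx
  have hpi := Real.pi_pos.ne'
  unfold kerH kerB
  rw [h]
  split_ifs
  · field_simp; ring
  · field_simp; ring

theorem intr_nbhd_sub {N : ℕ} (hN : 1 ≤ N) {v : Vtx} (hv : v ∈ VN N) {a : ℝ} (ha : 0 ≤ a)
    (ha1 : a ≤ 1) : intr (nbhd N a v) ⊆ intr (VN N) := by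
  have := nbhd_anti hN hv le_rfl ha ha1
  rw [nbhd_zero] at this
  exact intr_mono this

theorem qf_kerB {N : ℕ} (hN : 1 ≤ N) {v : Vtx} (hv : v ∈ VN N) {a : ℝ} (ha : 0 ≤ a)
    (ha1 : a ≤ 1) {G : Vtx → Vtx → ℝ} (hG : IsGreenFn (VN N) G) (c : Vtx → ℝ) :
    qf N G (kerB N v a) c = ∑ w ∈ VN N, c w * kerG N v a w := by
  unfold qf
  rw [Finset.sum_comm]
  refine Finset.sum_congr rfl fun w _ => ?_
  rw [← ker_repr hG (intr_nbhd_sub hN hv ha ha1) (kerG_spec N v a) w, Finset.mul_sum]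
  refine Finset.sum_congr rfl fun x _ => ?_
  unfold kerB
  ring

theorem qf_delta_kerH {N : ℕ} (hN : 1 ≤ N) {v : Vtx} (hv : v ∈ VN N) {a : ℝ} (ha : 0 ≤ a)
    (ha1 : a ≤ 1) {G : Vtx → Vtx → ℝ} (hG : IsGreenFn (VN N) G) :
    qf N G (fun x => if x = v then 1 else 0) (kerH N v a) = G v v - kerG N v a v := by
  rw [qf_symm hG]
  have : kerH N v a = fun x => (if x = v then 1 else 0) - kerB N v a x := rfl
  rw [this, qf_sub_left, qf_kerB hN hv ha ha1 hG]
  simp [qf, hv]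

theorem qf_kerH {N : ℕ} (hN : 1 ≤ N) {v : Vtx} (hv : v ∈ VN N) {a b : ℝ} (ha : 0 ≤ a) (hab : a ≤ b)
    (hb1 : b ≤ 1) {G : Vtx → Vtx → ℝ} (hG : IsGreenFn (VN N) G) :
    qf N G (kerH N v a) (kerH N v b) = G v v - kerG N v a v := by
  rw [qf_symm hG]
  have : kerH N v b = fun x => (if x = v then 1 else 0) - kerB N v b x := rfl
  rw [this, qf_sub_left, qf_kerB hN hv (ha.trans hab) hb1 hG,
    qf_delta_kerH hN hv ha (hab.trans hb1) hG, Finset.sum_eq_zero, sub_zero]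
  intro w _
  by_cases hw : w ∈ intr (nbhd N b v)
  · rw [kerH_zero N v a w (intr_mono (nbhd_anti hN hv ha hab hb1) hw), zero_mul]
  · rw [(kerG_spec N v b).1 w hw, mul_zero]

theorem phi_eq {N : ℕ} (hN : 1 ≤ N) {v : Vtx} (hv : v ∈ VN N) {a : ℝ} (ha : 0 ≤ a)
    (ha1 : a ≤ 1) {P : Measure FieldSp} [IsProbabilityMeasure P] {G : Vtx → Vtx → ℝ}
    (hG : IsGreenFn (VN N) G)
    (hP : ∀ c : Vtx → ℝ, P.map (lin N c) = gaussianReal 0 (Real.toNNReal (qf N G c c))) :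
    phiScale N P v a =ᵐ[P] lin N (kerH N v a) := by
  unfold phiScale scaleAlg
  refine condExp_lin hG hP {w : Vtx | w ∈ VN N ∧ w ∉ intr (nbhd N a v)} (fun w hw => hw.1)
    (kerB N v a) (kerH N v a) v hv ?_ ?_ ?_
  · intro x; unfold kerH; ring
  · intro x hx hxA
    refine kerH_zero N v a x ?_
    by_contra h
    exact hxA ⟨hx, h⟩
  · intro w hw
    rw [qf_kerB hN hv ha ha1 hG]
    simp only [ite_mul, one_mul, zero_mul, Finset.sum_ite_eq']
    rw [(kerG_spec N v a).1 w hw.2]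
    simp

theorem scaleAlg_le (N : ℕ) (v : Vtx) (a : ℝ) : scaleAlg N a v ≤ MeasurableSpace.pi := by
  refine iSup₂_le fun w _ => ?_
  exact (measurable_pi_apply w).comap_le

theorem scaleAlg_mono {N : ℕ} (hN : 1 ≤ N) {v : Vtx} (hv : v ∈ VN N) {a b : ℝ} (ha : 0 ≤ a)
    (hab : a ≤ b) (hb1 : b ≤ 1) : scaleAlg N a v ≤ scaleAlg N b v := by
  refine biSup_mono fun w hw => ?_
  exact ⟨hw.1, fun h => hw.2 (intr_mono (nbhd_anti hN hv ha hab hb1) h)⟩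

theorem phi_tower {N : ℕ} (hN : 1 ≤ N) {v : Vtx} (hv : v ∈ VN N) {a b : ℝ} (ha : 0 ≤ a)
    (ha1 : a ≤ 1) (hb : 0 ≤ b) (hb1 : b ≤ 1) {P : Measure FieldSp} [IsProbabilityMeasure P] :
    P[phiScale N P v a | scaleAlg N b v] =ᵐ[P] phiScale N P v (min a b) := by
  rcases le_total a b with h | h
  · rw [min_eq_left h]
    have : P[phiScale N P v a | scaleAlg N b v] = phiScale N P v a := by
      refine condExp_of_stronglyMeasurable (scaleAlg_le N v b) ?_ integrable_condExp
      exact stronglyMeasurable_condExp.mono (scaleAlg_mono hN hv ha h hb1)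
    rw [this]
  · rw [min_eq_right h]
    exact condExp_condExp_of_le (scaleAlg_mono hN hv hb h ha1) (scaleAlg_le N v a)

theorem lam_mono {M : ℕ} {sigv lamv : ℕ → ℝ} (hp : ScaleParams M sigv lamv) {i j : ℕ} (hij : i ≤ j)
    (hj : j ≤ M) : lamv i ≤ lamv j := by
  induction j, hij using Nat.le_induction with
  | base => exact le_rfl
  | succ k hk ih => exact (ih (by omega)).trans (hp.2.2.2.2 k (by omega)).le

theorem lam_nonneg {M : ℕ} {sigv lamv : ℕ → ℝ} (hp : ScaleParams M sigv lamv) {i : ℕ}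
    (hi : i ≤ M) : 0 ≤ lamv i := by
  have := lam_mono hp (Nat.zero_le i) hi
  rwa [hp.2.2.1] at this

theorem lam_le_one {M : ℕ} {sigv lamv : ℕ → ℝ} (hp : ScaleParams M sigv lamv) {i : ℕ}
    (hi : i ≤ M) : lamv i ≤ 1 := by
  have := lam_mono hp hi le_rfl
  rwa [hp.2.2.2.1] at this

theorem psi_eq {M : ℕ} {sigv lamv : ℕ → ℝ} (hp : ScaleParams M sigv lamv) {N : ℕ} (hN : 1 ≤ N)
    {v : Vtx} (hv : v ∈ VN N) {b : ℝ} (hb : 0 ≤ b) (hb1 : b ≤ 1) {P : Measure FieldSp}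
    [IsProbabilityMeasure P] {G : Vtx → Vtx → ℝ} (hG : IsGreenFn (VN N) G)
    (hP : ∀ c : Vtx → ℝ, P.map (lin N c) = gaussianReal 0 (Real.toNNReal (qf N G c c))) :
    psiScale N M sigv lamv P v b =ᵐ[P] fun ω => ∑ i ∈ Finset.Icc 1 M, sigv i *
      (lin N (kerH N v (min (lamv i) b)) ω - lin N (kerH N v (min (lamv (i - 1)) b)) ω) := by
  have hint : ∀ a, Integrable (phiScale N P v a) P := fun a => integrable_condExp
  have e : psiFld N M sigv lamv P v = ∑ i ∈ Finset.Icc 1 M,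
      sigv i • (phiScale N P v (lamv i) - phiScale N P v (lamv (i - 1))) := by
    funext ω
    simp [psiFld, Finset.sum_apply]
  unfold psiScale
  rw [e]
  refine (condExp_finsetSum (fun i _ => ((hint _).sub (hint _)).smul (sigv i)) _).trans ?_
  have hterm : ∀ i ∈ Finset.Icc 1 M,
      P[sigv i • (phiScale N P v (lamv i) - phiScale N P v (lamv (i - 1))) | scaleAlg N b v]
      =ᵐ[P] fun ω => sigv i *
      (lin N (kerH N v (min (lamv i) b)) ω - lin N (kerH N v (min (lamv (i - 1)) b)) ω) := by
    intro i hi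
    rw [Finset.mem_Icc] at hi
    have h0 := lam_nonneg hp hi.2
    have h1 := lam_le_one hp hi.2
    have h0' := lam_nonneg hp (show i - 1 ≤ M by omega)
    have h1' := lam_le_one hp (show i - 1 ≤ M by omega)
    filter_upwards [condExp_smul (μ := P) (sigv i) (phiScale N P v (lamv i) - phiScale N P v (lamv (i - 1)))
        (scaleAlg N b v),
      condExp_sub (hint (lamv i)) (hint (lamv (i - 1))) (scaleAlg N b v),
      phi_tower hN hv h0 h1 hb hb1 (P := P), phi_tower hN hv h0' h1' hb hb1 (P := P),
      phi_eq hN hv (le_min h0 hb) ((min_le_left _ _).trans h1) hG hP,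
      phi_eq hN hv (le_min h0' hb) ((min_le_left _ _).trans h1') hG hP] with ω a1 a2 a3 a4 a5 a6
    rw [a1, Pi.smul_apply, a2, Pi.sub_apply, a3, a4, a5, a6, smul_eq_mul]
  have hall := (Filter.eventually_all_finset (Finset.Icc 1 M)).mpr hterm
  filter_upwards [hall] with ω hω
  rw [Finset.sum_apply]
  exact Finset.sum_congr rfl fun i hi => hω i hi

/-- abstract orthogonal increments -/
noncomputable def DD (s : ℕ → ℝ) (u : ℕ → Vtx → ℝ) (m : ℕ) (x : Vtx) : ℝ :=
  ∑ i ∈ Finset.Icc 1 m, s i * (u i x - u (i - 1) x)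

theorem DD_succ (s : ℕ → ℝ) (u : ℕ → Vtx → ℝ) (m : ℕ) (x : Vtx) :
    DD s u (m + 1) x = DD s u m x + s (m + 1) * (u (m + 1) x - u m x) := by
  unfold DD
  rw [Finset.sum_Icc_succ_top (by omega)]
  simp

theorem qf_smul_left {N : ℕ} {G : Vtx → Vtx → ℝ} (t : ℝ) (c d : Vtx → ℝ) :
    qf N G (fun x => t * c x) d = t * qf N G c d := by
  simp only [qf, Finset.mul_sum]
  refine Finset.sum_congr rfl fun x _ => Finset.sum_congr rfl fun y _ => by ring

theorem qf_DD_succ {N : ℕ} {G : Vtx → Vtx → ℝ} (s : ℕ → ℝ) (u : ℕ → Vtx → ℝ) (m : ℕ) (d : Vtx → ℝ) :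
    qf N G (DD s u (m + 1)) d = qf N G (DD s u m) d
      + s (m + 1) * (qf N G (u (m + 1)) d - qf N G (u m) d) := by
  have : DD s u (m + 1) = fun x => DD s u m x + s (m + 1) * (u (m + 1) x - u m x) := by
    funext x; exact DD_succ s u m x
  rw [this, qf_add_left, qf_smul_left (s (m + 1)) (fun x => u (m + 1) x - u m x), qf_sub_left]

theorem qf_DD {N : ℕ} {G : Vtx → Vtx → ℝ} (hG : IsGreenFn (VN N) G) (s : ℕ → ℝ) (u : ℕ → Vtx → ℝ)
    (V : ℕ → ℝ) (M : ℕ) (hu : ∀ i j, i ≤ j → j ≤ M → qf N G (u i) (u j) = V i) :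
    ∀ m ≤ M, (∀ k, m ≤ k → k ≤ M →
        qf N G (DD s u m) (u k) = ∑ i ∈ Finset.Icc 1 m, s i * (V i - V (i - 1))) ∧
      qf N G (DD s u m) (DD s u m) = ∑ i ∈ Finset.Icc 1 m, s i ^ 2 * (V i - V (i - 1)) := by
  intro m
  induction m with
  | zero =>
    intro _
    simp [DD, qf]
  | succ m ih =>
    intro hm
    obtain ⟨h1, h2⟩ := ih (by omega)
    constructor
    · intro k hk hkM
      rw [qf_DD_succ, h1 k (by omega) hkM, hu _ _ hk hkM, hu _ _ (by omega) hkM,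
        Finset.sum_Icc_succ_top (by omega)]
      simp
    · rw [qf_DD_succ, qf_symm hG (DD s u m), qf_symm hG (u (m + 1)), qf_symm hG (u m),
        qf_DD_succ, qf_DD_succ, qf_DD_succ, h2, qf_symm hG (u (m+1)) (DD s u m),
        qf_symm hG (u m) (DD s u m), h1 _ (by omega) hm, h1 m le_rfl (by omega),
        hu (m+1) (m+1) le_rfl hm, hu m (m+1) (by omega) hm, hu m m le_rfl (by omega),
        qf_symm hG (u (m+1)) (u m), hu m (m+1) (by omega) hm,
        Finset.sum_Icc_succ_top (by omega)]
      simp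
      ring

theorem psiInc_sq {M : ℕ} {sigv lamv : ℕ → ℝ} (hp : ScaleParams M sigv lamv) {N : ℕ} (hN : 1 ≤ N)
    {v : Vtx} (hv : v ∈ VN N) {α β : ℝ} (hα : 0 ≤ α) (hαβ : α ≤ β) (hβ : β ≤ 1) {P : Measure FieldSp}
    [IsProbabilityMeasure P] {G : Vtx → Vtx → ℝ} (hG : IsGreenFn (VN N) G)
    (hP : ∀ c : Vtx → ℝ, P.map (lin N c) = gaussianReal 0 (Real.toNNReal (qf N G c c))) :
    ∫ ω, (psiInc N M sigv lamv P v α β ω) ^ 2 ∂P = ∑ i ∈ Finset.Icc 1 M, sigv i ^ 2 *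
      (kerG N v (max α (min β (lamv (i - 1)))) v - kerG N v (max α (min β (lamv i))) v) := by
  set c : ℕ → ℝ := fun i => max α (min β (lamv i)) with hc
  have hce : ∀ i, lin N (kerH N v (c i)) = fun ω => lin N (kerH N v (min (lamv i) β)) ω
      - lin N (kerH N v (min (lamv i) α)) ω + lin N (kerH N v α) ω := by
    intro i
    funext ω
    rcases le_total (lamv i) α with h | h
    · have e1 : c i = α := by
        simp only [hc]; rw [max_eq_left]; exact (min_le_right _ _).trans h
      rw [e1, min_eq_left h, min_eq_left (h.trans hαβ)]; ring
    · have e1 : c i = min (lamv i) β := by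
        simp only [hc]; rw [max_eq_right, min_comm]; exact le_min hαβ h
      rw [e1, min_eq_right h]; ring
  have hae : psiInc N M sigv lamv P v α β =ᵐ[P] lin N (DD sigv (fun i => kerH N v (c i)) M) := by
    filter_upwards [psi_eq hp hN hv hα (hαβ.trans hβ) hG hP,
      psi_eq hp hN hv (hα.trans hαβ) hβ hG hP] with ω h1 h2
    unfold psiInc
    rw [h1, h2, ← Finset.sum_sub_distrib]
    have : lin N (DD sigv (fun i => kerH N v (c i)) M) ω = ∑ i ∈ Finset.Icc 1 M,
        sigv i * (lin N (kerH N v (c i)) ω - lin N (kerH N v (c (i - 1))) ω) := by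
      unfold lin DD
      simp only [Finset.sum_mul, Finset.mul_sum, ← Finset.sum_sub_distrib]
      rw [Finset.sum_comm]
      refine Finset.sum_congr rfl fun x _ => Finset.sum_congr rfl fun y _ => by ring
    rw [this]
    refine Finset.sum_congr rfl fun i _ => ?_
    rw [hce, hce]
    ring
  have h1 : ∫ ω, (psiInc N M sigv lamv P v α β ω) ^ 2 ∂P
      = ∫ ω, (lin N (DD sigv (fun i => kerH N v (c i)) M) ω) ^ 2 ∂P := by
    refine integral_congr_ae ?_
    filter_upwards [hae] with ω h
    rw [h]
  rw [h1, lin_sq hG hP, (qf_DD hG sigv (fun i => kerH N v (c i))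
    (fun i => G v v - kerG N v (c i) v) M ?_ M le_rfl).2]
  · refine Finset.sum_congr rfl fun i _ => by ring
  · intro i j hij hj
    refine qf_kerH hN hv (le_max_of_le_left hα) ?_ ?_ hG
    · exact max_le_max le_rfl (min_le_min le_rfl (lam_mono hp hij hj))
    · exact max_le (hαβ.trans hβ) ((min_le_left _ _).trans hβ)

theorem stepFn_eq {M : ℕ} {sigv lamv : ℕ → ℝ} (hp : ScaleParams M sigv lamv) {k : ℕ} (hk : k < M)
    {r : ℝ} (h1 : lamv k < r) (h2 : r ≤ lamv (k + 1)) : stepFn M sigv lamv r = sigv (k + 1) := by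
  have h0 := lam_nonneg hp hk.le
  unfold stepFn
  rw [if_neg (by linarith), zero_add, Finset.sum_eq_single (k + 1)]
  · rw [if_pos]; simpa using ⟨h1, h2⟩
  · intro i hi hik
    rw [Finset.mem_Icc] at hi
    rw [if_neg]
    rintro ⟨h3, h4⟩
    rcases lt_or_gt_of_ne hik with h | h
    · have := lam_mono hp (show i ≤ k by omega) hk.le
      linarith
    · have := lam_mono hp (show k + 1 ≤ i - 1 by omega) (by omega)
      linarith
  · intro h
    exact absurd (Finset.mem_Icc.mpr ⟨by omega, by omega⟩) h

theorem Jint2_eq {M : ℕ} {sigv lamv : ℕ → ℝ} (hp : ScaleParams M sigv lamv)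
    {α β : ℝ} (hα : 0 ≤ α) (hαβ : α ≤ β) (hβ : β ≤ 1) :
    Jint2 (fun r => (stepFn M sigv lamv r) ^ 2) α β = ∑ i ∈ Finset.Icc 1 M, sigv i ^ 2 *
      (max α (min β (lamv i)) - max α (min β (lamv (i - 1)))) := by
  set c : ℕ → ℝ := fun i => max α (min β (lamv i)) with hc
  have c0 : c 0 = α := by
    simp only [hc, hp.2.2.1]
    rw [min_eq_right (hα.trans hαβ), max_eq_left hα]
  have cM : c M = β := by
    simp only [hc, hp.2.2.2.1]
    rw [min_eq_left hβ, max_eq_right hαβ]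
  have hcm : ∀ k < M, c k ≤ c (k + 1) := fun k hk =>
    max_le_max le_rfl (min_le_min le_rfl (lam_mono hp (by omega) (by omega)))
  have hval : ∀ k < M, ∀ r ∈ Set.uIoc (c k) (c (k + 1)),
      sigv (k + 1) ^ 2 = (stepFn M sigv lamv r) ^ 2 := by
    intro k hk r hr
    rw [Set.uIoc_of_le (hcm k hk)] at hr
    obtain ⟨h1, h2⟩ := hr
    simp only [hc] at h1 h2
    have h3 := max_lt_iff.mp h1
    have h4 : r ≤ min β (lamv (k + 1)) := by
      rcases le_max_iff.mp h2 with h | h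
      · linarith [h3.1]
      · exact h
    have h5 := le_min_iff.mp h4
    have h6 : lamv k < r := by
      rcases min_lt_iff.mp h3.2 with h | h
      · linarith [h5.1]
      · exact h
    rw [stepFn_eq hp hk h6 h5.2]
  have hadj := intervalIntegral.sum_integral_adjacent_intervals
    (f := fun r => (stepFn M sigv lamv r) ^ 2) (μ := volume) (a := c) (n := M) (by
      intro k hk
      have hcst : IntervalIntegrable (fun _ : ℝ => sigv (k + 1) ^ 2) volume (c k) (c (k + 1)) :=
        intervalIntegrable_const
      exact hcst.congr (fun r hr => hval k hk r hr))
  unfold Jint2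
  rw [c0, cM] at hadj
  rw [← hadj]
  have hI : ∀ f : ℕ → ℝ, ∑ i ∈ Finset.Icc 1 M, f i = ∑ k ∈ Finset.range M, f (k + 1) := by
    intro f
    rw [Finset.range_eq_Ico, Finset.sum_Ico_add' f 0 M 1]
    rfl
  rw [hI]
  refine Finset.sum_congr rfl fun k hk => ?_
  have hk := Finset.mem_range.mp hk
  have : ∫ r in c k..c (k + 1), (stepFn M sigv lamv r) ^ 2
      = ∫ r in c k..c (k + 1), sigv (k + 1) ^ 2 := by
    refine intervalIntegral.integral_congr_uIoo ?_
    intro r hr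
    exact (hval k hk r (Set.Ioo_subset_Ioc_self hr)).symm
  rw [this, intervalIntegral.integral_const, smul_eq_mul, Nat.add_sub_cancel]
  ring

end PE2

/-- **Lemma (Uniform variance upper bound).**
There is a constant `C₀ = C₀(σ) > 0` such that for all scales `0 ≤ α < α' ≤ 1` and all
`N` large enough (independent of `α` and `α'`),
`max_{v∈V_N} E[ψ_v(α,α')²] ≤ 𝒥_{σ²}(α,α') log N + C₀`. -/
theorem variance_uniform_upper_bound
    (M : ℕ) (sigv lamv : ℕ → ℝ) (hparams : ScaleParams M sigv lamv)
    (P : ℕ → MeasureTheory.Measure FieldSp) (hGFF : ∀ N, IsGFF N (P N)) :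
    ∃ C₀ : ℝ, 0 < C₀ ∧ ∃ N₀ : ℕ, ∀ N ≥ N₀, ∀ α α' : ℝ, 0 ≤ α → α < α' → α' ≤ 1 →
      ∀ v ∈ VN N,
        (∫ ω, (psiInc N M sigv lamv (P N) v α α' ω) ^ 2 ∂(P N))
          ≤ Jint2 (fun r => (stepFn M sigv lamv r) ^ 2) α α' * Real.log N + C₀ := by
  have hpi := Real.pi_pos
  have hs : 0 ≤ ∑ i ∈ Finset.Icc 1 M, sigv i ^ 2 * (32 * Real.pi + 3) :=
    Finset.sum_nonneg fun i _ => by positivity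
  refine ⟨(∑ i ∈ Finset.Icc 1 M, sigv i ^ 2 * (32 * Real.pi + 3)) + 1, by linarith, 1, ?_⟩
  intro N hN α α' hα hαα' hα' v hv
  obtain ⟨hprob, G, hG, hP⟩ := hGFF N
  rw [psiInc_sq hparams hN hv hα hαα'.le hα' hG hP, Jint2_eq hparams hα hαα'.le hα']
  refine le_trans ?_ (le_add_of_nonneg_right zero_le_one |>.trans (add_assoc _ _ _).le)
  rw [Finset.sum_mul, ← Finset.sum_add_distrib]
  refine Finset.sum_le_sum fun i hi => ?_
  rw [Finset.mem_Icc] at hi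
  have hk := key_bound hN hv (a := max α (min α' (lamv (i - 1)))) (b := max α (min α' (lamv i)))
    (le_max_of_le_left hα)
    (max_le_max le_rfl (min_le_min le_rfl (lam_mono hparams (by omega) hi.2)))
    (max_le (hαα'.le.trans hα') ((min_le_left _ _).trans hα'))
    (kerG_spec N v _) (kerG_spec N v _)
  have := mul_le_mul_of_nonneg_left hk (sq_nonneg (sigv i))
  linarith
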